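/- arXiv:2305.17225 — 6 statements merged into one kernel-verified Lean document; each statement's English description precedes it below -/
import Mathlib

section
/- In the nonlinear ICA setting (empty graph, unintervened joint p^0(z) = ∏_{i=1}^d p_i(z_i) with p_i strictly positive C¹ densities on ℝ), let T be a finite collection of strict subsets of [d] with ⋃_{τ∈T} τ = [d] and n_τ := |τ|, and for each τ ∈ T let there be n_τ perfect fat-hand interventional regimes with target τ whose intervened block densities factorize into strictly positive C¹ marginals q^s_{τ,j} (s ∈ [n_τ], j ∈ [n_τ]); write q^0_{τ,j} for the corresponding unintervened marginals. Assume, for each of two such models, that for Lebesgue-a.e. z_τ ∈ ℝ^{n_τ} the vectors v_τ(z_τ, s) − v_τ(z_τ, 0), s = 1,…,n_τ, are linearly independent in ℝ^{n_τ}, where v_τ(z_τ, s) := ((log q^s_{τ,1})′(z_{τ,1}),…,(log q^s_{τ,n_τ})′(z_{τ,n_τ})). If f, f′ : ℝ^d → ℝ^d are C¹ diffeomorphisms such that the pushforward of the first model's measure under f equals the pushforward of the second model's measure under f′ in every regime (unintervened and all interventional), then φ := f′⁻¹∘f is block-identifiable: for every τ ∈ T the components (φ_i)_{i∈τ} depend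 only on z_τ and the induced map φ_τ : ℝ^{n_τ} → ℝ^{n_τ} is a diffeomorphism. -/
open MeasureTheory

noncomputable section

/-- `f` depends only on the coordinates in `S`. -/
def DependsOnlyOn {d : ℕ} {α : Type*} (f : (Fin d → ℝ) → α) (S : Finset (Fin d)) : Prop :=
  ∀ z w : Fin d → ℝ, (∀ i ∈ S, z i = w i) → f z = f w

/-- `f` is a C¹ diffeomorphism between (real) normed spaces. -/
def IsC1Diffeo {E F : Type*} [NormedAddCommGroup E] [NormedSpace ℝ E]
    [NormedAddCommGroup F] [NormedSpace ℝ F] (f : E → F) : Prop :=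
  ContDiff ℝ 1 f ∧ ∃ g : F → E, ContDiff ℝ 1 g ∧
    Function.LeftInverse g f ∧ Function.RightInverse g f

/-- The measure on `ℝ^d` with density `ρ` with respect to Lebesgue measure. -/
def densityMeasure {d : ℕ} (ρ : (Fin d → ℝ) → ℝ) : Measure (Fin d → ℝ) :=
  volume.withDensity fun z => ENNReal.ofReal (ρ z)

/-- The measure on `ℝ` with density `r` with respect to Lebesgue measure. -/
def densityMeasure₁ (r : ℝ → ℝ) : Measure ℝ :=
  volume.withDensity fun x => ENNReal.ofReal (r x)

/-- Membership in `S_scaling`: the map acts by an elementwise C¹ diffeomorphism of `ℝ`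
on each coordinate. -/
def InSScaling {d : ℕ} (h : (Fin d → ℝ) → (Fin d → ℝ)) : Prop :=
  ∃ hs : Fin d → ℝ → ℝ, (∀ i, IsC1Diffeo (hs i)) ∧ ∀ (z : Fin d → ℝ) (i : Fin d), h z i = hs i (z i)

/-- Membership in `S_reparam`: a coordinate permutation composed with an element of
`S_scaling`. -/
def InSReparam {d : ℕ} (g : (Fin d → ℝ) → (Fin d → ℝ)) : Prop :=
  ∃ (σ : Equiv.Perm (Fin d)) (hs : Fin d → ℝ → ℝ),
    (∀ i, IsC1Diffeo (hs i)) ∧ ∀ (z : Fin d → ℝ) (i : Fin d), g z i = hs (σ i) (z (σ i))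

/-- A C¹ conditional-density family for the DAG on `Fin d` with parent map `pa`:
each `p i` is strictly positive, C¹, depends only on the coordinates `{i} ∪ pa i`,
and integrates to `1` in the `i`-th coordinate. -/
def IsCondFamily {d : ℕ} (pa : Fin d → Finset (Fin d))
    (p : Fin d → (Fin d → ℝ) → ℝ) : Prop :=
  ∀ i, (∀ z, 0 < p i z) ∧ ContDiff ℝ 1 (p i) ∧
    DependsOnlyOn (p i) (insert i (pa i)) ∧
    ∀ z, (∫ t : ℝ, p i (Function.update z i t)) = 1

/-- A strictly positive C¹ probability density on `ℝ`. -/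
def IsC1Density (r : ℝ → ℝ) : Prop :=
  (∀ x, 0 < r x) ∧ ContDiff ℝ 1 r ∧ (∫ x : ℝ, r x) = 1

/-- The joint density `z ↦ ∏ i, p i z` of a conditional-density family. -/
def jointDensity {d : ℕ} (p : Fin d → (Fin d → ℝ) → ℝ) : (Fin d → ℝ) → ℝ :=
  fun z => ∏ i, p i z

/-- `j` is an ancestor of `i` in the DAG with parent map `pa` (transitive closure of the
parent relation). -/
def IsAnc {d : ℕ} (pa : Fin d → Finset (Fin d)) (j i : Fin d) : Prop :=
  Relation.TransGen (fun a b => a ∈ pa b) j i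

/-- The observational joint mechanism of the block `τ`: the product of the causal mechanisms
of the nodes in `τ`. -/
def blockMech {d : ℕ} (p : Fin d → (Fin d → ℝ) → ℝ) (τ : Finset (Fin d)) :
    (Fin d → ℝ) → ℝ := fun z => ∏ i ∈ τ, p i z

/-- The `j`-th element of the block `τ` (under the canonical enumeration of `τ`). -/
def coordOf {d : ℕ} (τ : Finset (Fin d)) (j : Fin τ.card) : Fin d :=
  ((τ.equivFin.symm j : τ) : Fin d)

/-- A strictly positive C¹ joint intervened density over the block `τ` (no conditioning on
other variables): it depends only on the coordinates in `τ` and integrates to 1 over the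
block. -/
def IsBlockDensity {d : ℕ} (τ : Finset (Fin d)) (r : (Fin d → ℝ) → ℝ) : Prop :=
  (∀ z, 0 < r z) ∧ ContDiff ℝ 1 r ∧ DependsOnlyOn r τ ∧
    ∀ z : Fin d → ℝ,
      (∫ y : {x // x ∈ τ} → ℝ, r (fun j => if h : j ∈ τ then y ⟨j, h⟩ else z j)) = 1

/-- Embed a configuration of the block `τ` into `ℝ^d`, filling the other coordinates
with `0`. -/
def fillBlock {d : ℕ} (τ : Finset (Fin d)) (y : {x // x ∈ τ} → ℝ) : Fin d → ℝ :=
  fun j => if h : j ∈ τ then y ⟨j, h⟩ else 0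

/-- The map `ℝ^τ → ℝ^τ` induced by the components of `φ` indexed by `τ` (well defined when
those components depend only on the coordinates in `τ`). -/
def blockMap {d : ℕ} (φ : (Fin d → ℝ) → (Fin d → ℝ)) (τ : Finset (Fin d)) :
    ({x // x ∈ τ} → ℝ) → ({x // x ∈ τ} → ℝ) :=
  fun y i => φ (fillBlock τ y) (i : Fin d)

/-- Key analytic step. -/
theorem aux_depends {d n : ℕ} (τ : Finset (Fin d)) (c : Fin n → {x // x ∈ τ})
    (hc : Function.Surjective c)
    (φ ψ : (Fin d → ℝ) → (Fin d → ℝ)) (hφ : ContDiff ℝ 1 φ) (hψ : Continuous ψ)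
    (h1 : Function.LeftInverse ψ φ) (h2 : Function.RightInverse ψ φ)
    (a b : Fin n → Fin n → ℝ → ℝ) (hb : ∀ s j, Differentiable ℝ (b s j))
    (hab : ∀ z s, ∑ j, a s j (z (c j)) = ∑ j, b s j (φ z (c j)))
    (hind : ∀ᵐ (y : {x // x ∈ τ} → ℝ) ∂volume,
      LinearIndependent ℝ (fun s : Fin n => fun j : Fin n => deriv (b s j) (y (c j)))) :
    ∀ i ∈ τ, DependsOnlyOn (fun z => φ z i) τ := by
  have hdφ : Differentiable ℝ φ := hφ.differentiable (by norm_num)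
  have hline : ∀ (z v : Fin d → ℝ) (i : Fin d) (t : ℝ),
      HasDerivAt (fun t : ℝ => φ (z + t • v) i) (fderiv ℝ φ (z + t • v) v i) t := by
    intro z v i t
    have hl : HasDerivAt (fun t : ℝ => z + t • v) v t := by
      simpa using ((hasDerivAt_id t).smul_const v).const_add z
    have := (hdφ (z + t • v)).hasFDerivAt.comp_hasDerivAt t hl
    exact (hasDerivAt_pi.1 this) i
  set φe : (Fin d → ℝ) ≃ₜ (Fin d → ℝ) :=
    { toFun := φ, invFun := ψ, left_inv := h1, right_inv := h2,
      continuous_toFun := hφ.continuous, continuous_invFun := hψ } with hφe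
  have hdense : Dense {z : Fin d → ℝ |
      LinearIndependent ℝ (fun s : Fin n => fun j : Fin n => deriv (b s j) (φ z (c j)))} := by
    have hD := Measure.dense_of_ae hind
    have ho : IsOpenMap (fun (z : Fin d → ℝ) (i : {x // x ∈ τ}) => z i) := by
      let L : (Fin d → ℝ) →L[ℝ] ({x // x ∈ τ} → ℝ) :=
        ContinuousLinearMap.pi fun i => ContinuousLinearMap.proj (i : Fin d)
      have hL : Function.Surjective L := by
        intro y
        refine ⟨fillBlock τ y, ?_⟩
        ext i
        simp [L, fillBlock]
      exact L.isOpenMap hL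
    exact (hD.preimage ho).preimage φe.isOpenMap
  have hzero : ∀ (v : Fin d → ℝ), (∀ i ∈ τ, v i = 0) → ∀ i ∈ τ, ∀ z, fderiv ℝ φ z v i = 0 := by
    intro v hv i hi
    have hcont : Continuous (fun z => fderiv ℝ φ z v i) := by
      have h := hφ.continuous_fderiv (by norm_num)
      exact (continuous_apply i).comp (h.clm_apply continuous_const)
    have : (fun z => fderiv ℝ φ z v i) = fun _ => 0 := by
      refine Continuous.ext_on hdense hcont continuous_const ?_
      intro z hz
      have hz' : LinearIndependent ℝ (Matrix.of
        (fun s : Fin n => fun j : Fin n => deriv (b s j) (φ z (c j)))).row := hz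
      rw [Matrix.linearIndependent_rows_iff_isUnit, ← Matrix.mulVec_injective_iff_isUnit] at hz'
      have hw : (fun j => fderiv ℝ φ z v (c j)) = (0 : Fin n → ℝ) := by
        apply hz'
        rw [Matrix.mulVec_zero]
        ext s
        simp only [Matrix.mulVec, dotProduct, Matrix.of_apply, Pi.zero_apply]
        have hder : HasDerivAt (fun t : ℝ => ∑ j, b s j (φ (z + t • v) (c j)))
            (∑ j, deriv (b s j) (φ z (c j)) * fderiv ℝ φ z v (c j)) 0 := by
          refine HasDerivAt.fun_sum fun j _ => ?_
          have h0 := hline z v (c j) 0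
          have hbj : HasDerivAt (b s j) (deriv (b s j) (φ z (c j))) (φ (z + (0:ℝ) • v) (c j)) := by
            simpa using (hb s j _).hasDerivAt
          have := hbj.comp (0 : ℝ) h0
          simpa [Function.comp_def] using this
        have hconst : (fun t : ℝ => ∑ j, b s j (φ (z + t • v) (c j))) =
            fun _ => ∑ j, a s j (z (c j)) := by
          ext t
          rw [← hab]
          refine Finset.sum_congr rfl fun j _ => ?_
          simp [hv _ (c j).2]
        rw [hconst] at hder
        exact hder.unique (hasDerivAt_const _ _)
      obtain ⟨j, hj⟩ := hc ⟨i, hi⟩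
      have := congrFun hw j
      simpa [hj] using this
    exact fun z => congrFun this z
  intro i hi z w hzw
  have hv : ∀ i ∈ τ, (w - z) i = 0 := fun i hi => by simp [hzw i hi]
  have hd : ∀ t : ℝ, HasDerivAt (fun t : ℝ => φ (z + t • (w - z)) i) 0 t := by
    intro t
    have := hline z (w - z) i t
    rwa [hzero _ hv i hi] at this
  have := is_const_of_deriv_eq_zero (fun t => (hd t).differentiableAt) (fun t => (hd t).deriv) 0 1
  simpa using this

/-- Key measure-theoretic step: density ratios are transported by `g' ∘ f`. -/
theorem aux_ratio {d : ℕ} (P0 Ps Q0 Qs : (Fin d → ℝ) → ℝ)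
    (hP0 : Continuous P0) (hPs : Continuous Ps) (hQ0 : Continuous Q0) (hQs : Continuous Qs)
    (pP0 : ∀ z, 0 < P0 z) (pPs : ∀ z, 0 < Ps z) (pQ0 : ∀ z, 0 < Q0 z) (pQs : ∀ z, 0 < Qs z)
    (f g f' g' : (Fin d → ℝ) → (Fin d → ℝ))
    (hf : Continuous f) (hg : Continuous g) (hf' : Continuous f') (hg' : Continuous g')
    (hgf : Function.LeftInverse g f)
    (hinv₁ : Function.LeftInverse g' f') (hinv₂ : Function.RightInverse g' f')
    (h0 : Measure.map f (densityMeasure P0) = Measure.map f' (densityMeasure Q0))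
    (hs : Measure.map f (densityMeasure Ps) = Measure.map f' (densityMeasure Qs)) :
    ∀ z, Ps z / P0 z = Qs (g' (f z)) / Q0 (g' (f z)) := by
  have hdens : ∀ A B : (Fin d → ℝ) → ℝ, Continuous A → Continuous B → (∀ z, 0 < A z) →
      (∀ z, 0 < B z) → densityMeasure B =
        (densityMeasure A).withDensity (fun z => ENNReal.ofReal (B z / A z)) := by
    intro A B hA hB pA pB
    unfold densityMeasure
    have hdiv : Continuous fun z => B z / A z := hB.div hA fun z => (pA z).ne'
    rw [← withDensity_mul _ hA.measurable.ennreal_ofReal hdiv.measurable.ennreal_ofReal]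
    congr 1
    ext z
    rw [Pi.mul_apply, ← ENNReal.ofReal_mul (pA z).le, mul_div_cancel₀ _ (pA z).ne']
  have hmap : ∀ A B : (Fin d → ℝ) → ℝ,
      Measure.map f (densityMeasure A) = Measure.map f' (densityMeasure B) →
      Measure.map (fun z => g' (f z)) (densityMeasure A) = densityMeasure B := by
    intro A B h
    have := congrArg (Measure.map g') h
    rw [Measure.map_map hg'.measurable hf.measurable,
      Measure.map_map hg'.measurable hf'.measurable, hinv₁.comp_eq_id, Measure.map_id] at this
    exact this
  have m0 := hmap _ _ h0
  have ms := hmap _ _ hs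
  have hφ : Continuous fun z => g' (f z) := hg'.comp hf
  have hψ : Continuous fun z => g (f' z) := hg.comp hf'
  have hψφ : ∀ z, g (f' (g' (f z))) = z := fun z => by rw [hinv₂, hgf]
  set r : (Fin d → ℝ) → ℝ := fun y => Ps (g (f' y)) / P0 (g (f' y)) with hr
  have hrc : Continuous r := (hPs.comp hψ).div (hP0.comp hψ) fun z => (pP0 _).ne'
  have hr'c : Continuous fun y => Qs y / Q0 y := hQs.div hQ0 fun z => (pQ0 _).ne'
  have e1 : densityMeasure Qs = (densityMeasure Q0).withDensity (fun y => ENNReal.ofReal (r y)) := by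
    rw [← ms, ← m0]
    ext S hS
    rw [Measure.map_apply hφ.measurable hS, withDensity_apply _ hS,
      setLIntegral_map hS hrc.measurable.ennreal_ofReal hφ.measurable,
      hdens P0 Ps hP0 hPs pP0 pPs, withDensity_apply _ (hφ.measurable hS)]
    simp only [hr, hψφ]
  have e2 := hdens Q0 Qs hQ0 hQs pQ0 pQs
  have : SigmaFinite (densityMeasure Q0) := by
    unfold densityMeasure
    exact SigmaFinite.withDensity_ofReal _
  have e3 := (withDensity_eq_iff_of_sigmaFinite
    hrc.measurable.ennreal_ofReal.aemeasurable hr'c.measurable.ennreal_ofReal.aemeasurable).1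
      (e1.symm.trans e2)
  have e4 : (fun y => ENNReal.ofReal (r y)) =ᵐ[volume] fun y => ENNReal.ofReal (Qs y / Q0 y) := by
    refine (withDensity_absolutelyContinuous' hQ0.measurable.ennreal_ofReal.aemeasurable ?_).ae_eq e3
    exact Filter.Eventually.of_forall fun z => by simpa using pQ0 z
  have e5 := (Continuous.ae_eq_iff_eq volume (ENNReal.continuous_ofReal.comp hrc)
    (ENNReal.continuous_ofReal.comp hr'c)).1 e4
  intro z
  have e6 := congrFun e5 (g' (f z))
  simp only [Function.comp] at e6
  rw [ENNReal.ofReal_eq_ofReal_iff (by simp only [hr]; exact (div_pos (pPs _) (pP0 _)).le)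
    (div_pos (pQs _) (pQ0 _)).le] at e6
  simpa only [hr, hψφ] using e6

/-- Logarithm of a density ratio for a factorized block intervention. -/
theorem aux_log {d : ℕ} (τ : Finset (Fin d)) (p : Fin d → ℝ → ℝ) (hp : ∀ i x, 0 < p i x)
    (w : Fin τ.card → ℝ → ℝ) (hw : ∀ j x, 0 < w j x) (z : Fin d → ℝ) :
    Real.log (((∏ j : Fin τ.card, w j (z (coordOf τ j))) * ∏ i ∈ τᶜ, p i (z i)) /
      ∏ i, p i (z i)) =
    ∑ j : Fin τ.card, (Real.log (w j (z (coordOf τ j))) -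
      Real.log (p (coordOf τ j) (z (coordOf τ j)))) := by
  have hτ : ∏ i ∈ τ, p i (z i) = ∏ j : Fin τ.card, p (coordOf τ j) (z (coordOf τ j)) := by
    rw [← Finset.prod_coe_sort, ← τ.equivFin.symm.prod_comp]
    rfl
  have hc : (∏ i ∈ τᶜ, p i (z i)) ≠ 0 := (Finset.prod_pos fun i _ => hp i _).ne'
  rw [← Finset.prod_mul_prod_compl τ, mul_div_mul_right _ _ hc, hτ, Real.log_div
    (Finset.prod_pos fun i _ => hw i _).ne' (Finset.prod_pos fun i _ => hp _ _).ne',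
    Real.log_prod (fun i _ => (hw i _).ne'), Real.log_prod (fun i _ => (hp _ _).ne'),
    Finset.sum_sub_distrib]

theorem aux_fill {d : ℕ} (τ : Finset (Fin d)) : ContDiff ℝ 1 (fillBlock τ) := by
  rw [contDiff_pi]
  intro j
  by_cases h : j ∈ τ
  · simp only [fillBlock, h, dif_pos]
    exact contDiff_apply ℝ ℝ _
  · simp only [fillBlock, h, dif_neg, not_false_eq_true]
    exact contDiff_const

theorem aux_blockMap {d : ℕ} (τ : Finset (Fin d)) (φ : (Fin d → ℝ) → (Fin d → ℝ))
    (hφ : ContDiff ℝ 1 φ) : ContDiff ℝ 1 (blockMap φ τ) := by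
  rw [contDiff_pi]
  intro i
  exact (contDiff_pi.1 (hφ.comp (aux_fill τ))) i

theorem aux_blockInv {d : ℕ} (τ : Finset (Fin d)) (φ ψ : (Fin d → ℝ) → (Fin d → ℝ))
    (h : Function.LeftInverse ψ φ) (hψ : ∀ i ∈ τ, DependsOnlyOn (fun z => ψ z i) τ) :
    Function.LeftInverse (blockMap ψ τ) (blockMap φ τ) := by
  intro y
  ext i
  have : ψ (fillBlock τ (blockMap φ τ y)) i = ψ (φ (fillBlock τ y)) i := by
    refine hψ i i.2 _ _ fun j hj => ?_
    simp [fillBlock, hj, blockMap]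
  simp only [blockMap] at this ⊢
  rw [this, h]
  simp [fillBlock]

/-- **Corollary (ICA with fat-hand interventions: block identifiability).** The latent graph
is empty; two models with strictly positive C¹ densities `(p i)`, `(q i)`. The target sets
`τ ∈ T` are strict subsets of the variables covering all of them; for each `τ ∈ T` there are
`|τ|` perfect fat-hand interventional regimes whose intervened block densities factorize into
strictly positive C¹ marginals `u τ s j` (resp. `u' τ s j`). Assume in both models that,
almost everywhere, the vectors `v(z_τ, s) − v(z_τ, 0)` of marginal log-density derivatives
are linearly independent. If `f`, `f′` are C¹ diffeomorphisms with matching pushforwards in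
the unintervened regime and in every interventional regime, then `φ := f′⁻¹ ∘ f` is
block-identifiable: for each `τ ∈ T` the components of `φ` indexed by `τ` depend only on
`z_τ`, and the induced block map is a diffeomorphism. -/
theorem ica_fat_hand_block_identifiability {d : ℕ}
    (p q : Fin d → ℝ → ℝ)
    (hp : ∀ i, IsC1Density (p i)) (hq : ∀ i, IsC1Density (q i))
    (T : Finset (Finset (Fin d)))
    (hcover : ∀ i : Fin d, ∃ τ ∈ T, i ∈ τ)
    (hstrict : ∀ τ ∈ T, τ ≠ Finset.univ)
    (u u' : (τ : Finset (Fin d)) → Fin τ.card → Fin τ.card → ℝ → ℝ)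
    (hu : ∀ τ ∈ T, ∀ (s j : Fin τ.card), IsC1Density (u τ s j))
    (hu' : ∀ τ ∈ T, ∀ (s j : Fin τ.card), IsC1Density (u' τ s j))
    (hdiscp : ∀ τ ∈ T, ∀ᵐ (y : {x // x ∈ τ} → ℝ) ∂volume,
        LinearIndependent ℝ (fun s : Fin τ.card => fun j : Fin τ.card =>
          deriv (fun t => Real.log (u τ s j t)) (y (τ.equivFin.symm j)) -
            deriv (fun t => Real.log (p (coordOf τ j) t)) (y (τ.equivFin.symm j))))
    (hdiscq : ∀ τ ∈ T, ∀ᵐ (y : {x // x ∈ τ} → ℝ) ∂volume,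
        LinearIndependent ℝ (fun s : Fin τ.card => fun j : Fin τ.card =>
          deriv (fun t => Real.log (u' τ s j t)) (y (τ.equivFin.symm j)) -
            deriv (fun t => Real.log (q (coordOf τ j) t)) (y (τ.equivFin.symm j))))
    (f f' g' : (Fin d → ℝ) → (Fin d → ℝ))
    (hf : IsC1Diffeo f) (hf' : ContDiff ℝ 1 f') (hg' : ContDiff ℝ 1 g')
    (hinv₁ : Function.LeftInverse g' f') (hinv₂ : Function.RightInverse g' f')
    (hmatch0 : Measure.map f (densityMeasure fun z => ∏ i, p i (z i)) =
        Measure.map f' (densityMeasure fun z => ∏ i, q i (z i)))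
    (hmatch : ∀ τ ∈ T, ∀ s : Fin τ.card,
        Measure.map f (densityMeasure fun z =>
            (∏ j : Fin τ.card, u τ s j (z (coordOf τ j))) * ∏ i ∈ τᶜ, p i (z i)) =
        Measure.map f' (densityMeasure fun z =>
            (∏ j : Fin τ.card, u' τ s j (z (coordOf τ j))) * ∏ i ∈ τᶜ, q i (z i))) :
    ∀ τ ∈ T,
      (∀ i ∈ τ, DependsOnlyOn (fun z => g' (f z) i) τ) ∧
      IsC1Diffeo (blockMap (fun z => g' (f z)) τ) := by
  obtain ⟨hfc, g, hg, hgf, hfg⟩ := hf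
  intro τ hτ
  have h1 : Function.LeftInverse (fun z => g (f' z)) (fun z => g' (f z)) := fun z => by
    simp only; rw [hinv₂, hgf]
  have h2 : Function.LeftInverse (fun z => g' (f z)) (fun z => g (f' z)) := fun z => by
    simp only; rw [hfg, hinv₁]
  have hφ : ContDiff ℝ 1 (fun z => g' (f z)) := hg'.comp hfc
  have hψ : ContDiff ℝ 1 (fun z => g (f' z)) := hg.comp hf'
  have c0 : ∀ r : Fin d → ℝ → ℝ, (∀ i, IsC1Density (r i)) →
      Continuous fun z : Fin d → ℝ => ∏ i, r i (z i) := fun r hr =>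
    continuous_finset_prod _ fun i _ => (hr i).2.1.continuous.comp (continuous_apply i)
  have cs : ∀ (r : Fin d → ℝ → ℝ) (w : Fin τ.card → ℝ → ℝ), (∀ i, IsC1Density (r i)) →
      (∀ j, IsC1Density (w j)) → Continuous fun z : Fin d → ℝ =>
        (∏ j : Fin τ.card, w j (z (coordOf τ j))) * ∏ i ∈ τᶜ, r i (z i) := fun r w hr hw =>
    (continuous_finset_prod _ fun j _ => (hw j).2.1.continuous.comp (continuous_apply _)).mul
      (continuous_finset_prod _ fun i _ => (hr i).2.1.continuous.comp (continuous_apply i))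
  have key : ∀ z s, ∑ j : Fin τ.card, (Real.log (u τ s j (z (coordOf τ j))) -
      Real.log (p (coordOf τ j) (z (coordOf τ j)))) =
      ∑ j : Fin τ.card, (Real.log (u' τ s j (g' (f z) (coordOf τ j))) -
      Real.log (q (coordOf τ j) (g' (f z) (coordOf τ j)))) := by
    intro z s
    rw [← aux_log τ p (fun i => (hp i).1) (u τ s) (fun j => (hu τ hτ s j).1) z,
      ← aux_log τ q (fun i => (hq i).1) (u' τ s) (fun j => (hu' τ hτ s j).1)]
    congr 1
    exact aux_ratio _ _ _ _ (c0 p hp) (cs p (u τ s) hp (hu τ hτ s)) (c0 q hq)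
      (cs q (u' τ s) hq (hu' τ hτ s))
      (fun z => Finset.prod_pos fun i _ => (hp i).1 _)
      (fun z => mul_pos (Finset.prod_pos fun j _ => (hu τ hτ s j).1 _)
        (Finset.prod_pos fun i _ => (hp i).1 _))
      (fun z => Finset.prod_pos fun i _ => (hq i).1 _)
      (fun z => mul_pos (Finset.prod_pos fun j _ => (hu' τ hτ s j).1 _)
        (Finset.prod_pos fun i _ => (hq i).1 _))
      f g f' g' hfc.continuous hg.continuous hf'.continuous hg'.continuous hgf hinv₁ hinv₂
      hmatch0 (hmatch τ hτ s) z
  have dl : ∀ r, IsC1Density r → Differentiable ℝ (fun t => Real.log (r t)) := fun r hr =>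
    (hr.2.1.differentiable (by norm_num)).log fun x => (hr.1 x).ne'
  have dφ : ∀ i ∈ τ, DependsOnlyOn (fun z => g' (f z) i) τ := by
    refine aux_depends τ τ.equivFin.symm τ.equivFin.symm.surjective _ _ hφ hψ.continuous h1 h2
      (fun s j t => Real.log (u τ s j t) - Real.log (p (coordOf τ j) t))
      (fun s j t => Real.log (u' τ s j t) - Real.log (q (coordOf τ j) t))
      (fun s j => (dl _ (hu' τ hτ s j)).sub (dl _ (hq _))) key ?_
    filter_upwards [hdiscq τ hτ] with y hy
    convert hy using 3 with s j
    exact deriv_fun_sub (dl _ (hu' τ hτ s j) _) (dl _ (hq _) _)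
  have dψ : ∀ i ∈ τ, DependsOnlyOn (fun z => g (f' z) i) τ := by
    refine aux_depends τ τ.equivFin.symm τ.equivFin.symm.surjective _ _ hψ hφ.continuous h2 h1
      (fun s j t => Real.log (u' τ s j t) - Real.log (q (coordOf τ j) t))
      (fun s j t => Real.log (u τ s j t) - Real.log (p (coordOf τ j) t))
      (fun s j => (dl _ (hu τ hτ s j)).sub (dl _ (hp _))) ?_ ?_
    · intro z s
      have := key (g (f' z)) s
      rw [hfg, hinv₁] at this
      exact this.symm
    filter_upwards [hdiscp τ hτ] with y hy
    convert hy using 3 with s j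
    exact deriv_fun_sub (dl _ (hu τ hτ s j) _) (dl _ (hp _) _)
  exact ⟨dφ, aux_blockMap τ _ hφ, blockMap (fun z => g (f' z)) τ, aux_blockMap τ _ hψ,
    aux_blockInv τ _ _ h1 dψ, aux_blockInv τ _ _ h2 dφ⟩
end
end

section
/- Assume the hypotheses of the fat-hand block-identifiability theorem (two models with perfect fat-hand interventions whose targets cover [d], block-interventional discrepancy, and C¹ diffeomorphisms f, f′ matching all pushforwards), with all densities and diffeomorphisms additionally C². Suppose furthermore that for some target set τ with n := |τ| there are 2n perfect interventional regimes with target τ whose intervened block densities factorize into strictly positive C² marginals q^s_{τ,j}, such that for every z_τ ∈ ℝⁿ the vectors w(z_τ,1) − w(z_τ,0), …, w(z_τ,2n) − w(z_τ,0) are linearly independent in ℝ^{2n}, where w(z_τ, s) := ( ((q^s_{τ,1})′/q^s_{τ,1})′(z_{τ,1}), …, ((q^s_{τ,n})′/q^s_{τ,n})′(z_{τ,n}), ((q^s_{τ,1})′/q^s_{τ,1})(z_{τ,1}), …, ((q^s_{τ,n})′/q^s_{τ,n})(z_{τ,n}) ) and s = 0 denotes the unintervened block mechanism. Then the block map φ_τ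 : ℝⁿ → ℝⁿ (from the block-identifiability conclusion for φ := f′⁻¹∘f) belongs to S_reparam on ℝⁿ: there exist a permutation π of [n] and C¹ diffeomorphisms h_1,…,h_n of ℝ such that φ_τ(z)_j = h_j(z_{π(j)}) for all z ∈ ℝⁿ and all j ∈ [n]. -/
open MeasureTheory

noncomputable section

/-- `f` is a C² diffeomorphism between (real) normed spaces. -/
def IsC2Diffeo {E F : Type*} [NormedAddCommGroup E] [NormedSpace ℝ E]
    [NormedAddCommGroup F] [NormedSpace ℝ F] (f : E → F) : Prop :=
  ContDiff ℝ 2 f ∧ ∃ g : F → E, ContDiff ℝ 2 g ∧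
    Function.LeftInverse g f ∧ Function.RightInverse g f

/-- A C² conditional-density family for the DAG with parent map `pa`. -/
def IsCondFamily2 {d : ℕ} (pa : Fin d → Finset (Fin d))
    (p : Fin d → (Fin d → ℝ) → ℝ) : Prop :=
  ∀ i, (∀ z, 0 < p i z) ∧ ContDiff ℝ 2 (p i) ∧
    DependsOnlyOn (p i) (insert i (pa i)) ∧
    ∀ z, (∫ t : ℝ, p i (Function.update z i t)) = 1

/-- A strictly positive C² joint intervened density over the block `τ`. -/
def IsBlockDensity2 {d : ℕ} (τ : Finset (Fin d)) (r : (Fin d → ℝ) → ℝ) : Prop :=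
  (∀ z, 0 < r z) ∧ ContDiff ℝ 2 r ∧ DependsOnlyOn r τ ∧
    ∀ z : Fin d → ℝ,
      (∫ y : {x // x ∈ τ} → ℝ, r (fun j => if h : j ∈ τ then y ⟨j, h⟩ else z j)) = 1

/-- A strictly positive C² probability density on `ℝ`. -/
def IsC2Density (r : ℝ → ℝ) : Prop :=
  (∀ x, 0 < r x) ∧ ContDiff ℝ 2 r ∧ (∫ x : ℝ, r x) = 1

/-- The vector `w(z_τ, s)` of Proposition 7: second and first log-derivative statistics
`((ρ j)′/ρ j)′` and `(ρ j)′/ρ j` of the marginals `ρ j`, evaluated at the block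
configuration `y`. -/
def wVec {d : ℕ} (τ : Finset (Fin d)) (ρ : Fin τ.card → ℝ → ℝ)
    (y : {x // x ∈ τ} → ℝ) : Fin τ.card ⊕ Fin τ.card → ℝ :=
  Sum.elim
    (fun j => deriv (fun t => deriv (ρ j) t / ρ j t) (y (τ.equivFin.symm j)))
    (fun j => deriv (ρ j) (y (τ.equivFin.symm j)) / ρ j (y (τ.equivFin.symm j)))


/-- Density ratios are transported by the map matching the pushforwards. -/
lemma ratio_transport {d : ℕ} (f f' g g' : (Fin d → ℝ) → (Fin d → ℝ))
    (hf : Continuous f) (hf' : Continuous f') (hg : Continuous g) (hg' : Continuous g')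
    (hgf : Function.LeftInverse g f)
    (hgf' : Function.LeftInverse g' f') (hfg' : Function.RightInverse g' f')
    (ρ0 ρ1 σ0 σ1 : (Fin d → ℝ) → ℝ)
    (cρ0 : Continuous ρ0) (cρ1 : Continuous ρ1) (cσ0 : Continuous σ0) (cσ1 : Continuous σ1)
    (pρ0 : ∀ z, 0 < ρ0 z) (pρ1 : ∀ z, 0 < ρ1 z) (pσ0 : ∀ z, 0 < σ0 z) (pσ1 : ∀ z, 0 < σ1 z)
    (h0 : Measure.map f (densityMeasure ρ0) = Measure.map f' (densityMeasure σ0))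
    (h1 : Measure.map f (densityMeasure ρ1) = Measure.map f' (densityMeasure σ1)) :
    ∀ z, ρ1 z / ρ0 z = σ1 (g' (f z)) / σ0 (g' (f z)) := by
  have key : ∀ ρ σ : (Fin d → ℝ) → ℝ,
      Measure.map f (densityMeasure ρ) = Measure.map f' (densityMeasure σ) →
      Measure.map (fun z => g' (f z)) (densityMeasure ρ) = densityMeasure σ := by
    intro ρ σ h
    have h2 := congrArg (Measure.map g') h
    rw [Measure.map_map hg'.measurable hf.measurable,
      Measure.map_map hg'.measurable hf'.measurable, hgf'.comp_eq_id, Measure.map_id] at h2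
    exact h2
  have k0 := key _ _ h0
  have k1 := key _ _ h1
  have cφ : Continuous (fun z => g' (f z)) := hg'.comp hf
  have cψ : Continuous (fun z => g (f' z)) := hg.comp hf'
  have hψφ : ∀ z, g (f' (g' (f z))) = z := fun z => by rw [hfg' (f z), hgf z]
  have cR : Continuous (fun z => ρ1 z / ρ0 z) := cρ1.div cρ0 (fun z => (pρ0 z).ne')
  have e1 : densityMeasure ρ1 =
      (densityMeasure ρ0).withDensity (fun z => ENNReal.ofReal (ρ1 z / ρ0 z)) := by
    unfold densityMeasure
    rw [← withDensity_mul _ cρ0.measurable.ennreal_ofReal cR.measurable.ennreal_ofReal]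
    congr 1
    funext z
    simp only [Pi.mul_apply]
    rw [← ENNReal.ofReal_mul (pρ0 z).le, mul_div_cancel₀ _ (pρ0 z).ne']
  have cRψ : Continuous (fun z => ρ1 (g (f' z)) / ρ0 (g (f' z))) := cR.comp cψ
  have e2 : densityMeasure σ1 = (densityMeasure σ0).withDensity
      (fun z => ENNReal.ofReal (ρ1 (g (f' z)) / ρ0 (g (f' z)))) := by
    rw [← k1, ← k0, e1]
    ext A hA
    rw [Measure.map_apply cφ.measurable hA, withDensity_apply _ (cφ.measurable hA),
      withDensity_apply _ hA, setLIntegral_map hA cRψ.measurable.ennreal_ofReal cφ.measurable]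
    simp only [hψφ]
  have e3 : densityMeasure σ1 = volume.withDensity
      (fun z => ENNReal.ofReal (σ0 z * (ρ1 (g (f' z)) / ρ0 (g (f' z))))) := by
    rw [e2]
    unfold densityMeasure
    rw [← withDensity_mul _ cσ0.measurable.ennreal_ofReal cRψ.measurable.ennreal_ofReal]
    congr 1
    funext z
    simp only [Pi.mul_apply]
    rw [← ENNReal.ofReal_mul (pσ0 z).le]
  have cP : Continuous (fun z => σ0 z * (ρ1 (g (f' z)) / ρ0 (g (f' z)))) := cσ0.mul cRψ
  unfold densityMeasure at e3
  rw [withDensity_eq_iff_of_sigmaFinite cσ1.measurable.ennreal_ofReal.aemeasurable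
    cP.measurable.ennreal_ofReal.aemeasurable] at e3
  have e4 := (Continuous.ae_eq_iff_eq volume (ENNReal.continuous_ofReal.comp cσ1)
    (ENNReal.continuous_ofReal.comp cP)).1 e3
  intro z
  have h := congrFun e4 (g' (f z))
  simp only [Function.comp, hψφ] at h
  rw [ENNReal.ofReal_eq_ofReal_iff (pσ1 _).le
    (mul_nonneg (pσ0 _).le (div_pos (pρ1 _) (pρ0 _)).le)] at h
  rw [h, mul_div_cancel_left₀ _ (pσ0 _).ne']

/-- A full-size linearly independent family of vectors separates linear functionals. -/
lemma functional_zero {n : ℕ} (v : Fin (2 * n) → Fin n ⊕ Fin n → ℝ)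
    (hv : LinearIndependent ℝ v) (a b : Fin n → ℝ)
    (h : ∀ s, (∑ j, v s (Sum.inl j) * a j) + ∑ j, v s (Sum.inr j) * b j = 0) :
    (∀ j, a j = 0) ∧ ∀ j, b j = 0 := by
  rcases Nat.eq_zero_or_pos n with hn | hn
  · subst hn
    exact ⟨fun j => j.elim0, fun j => j.elim0⟩
  have : Nonempty (Fin (2 * n)) := ⟨⟨0, by omega⟩⟩
  have hs := hv.span_eq_top_of_card_eq_finrank (by simp; omega)
  let L : (Fin n ⊕ Fin n → ℝ) →ₗ[ℝ] ℝ :=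
    ∑ i, (Sum.elim a b i) • LinearMap.proj (R := ℝ) (φ := fun _ : Fin n ⊕ Fin n => ℝ) i
  have hL : ∀ x, L x = ∑ i, Sum.elim a b i * x i := by
    intro x; simp [L, LinearMap.sum_apply]
  have h0 : L = 0 := by
    apply LinearMap.ext_on_range hs
    intro s
    rw [hL, Fintype.sum_sum_type, LinearMap.zero_apply, ← h s]
    simp [mul_comm]
  have h1 : ∀ i, Sum.elim a b i = 0 := by
    intro i
    have := hL (Pi.single i 1)
    rw [h0] at this
    simpa [Pi.single_apply] using this.symm
  exact ⟨fun j => h1 (Sum.inl j), fun j => h1 (Sum.inr j)⟩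

/-- The analytic core. -/
lemma ica_core {d n : ℕ} {ι : Type} (c : Fin n → Fin d) (hc : Function.Injective c)
    (φ ψ : (Fin d → ℝ) → (Fin d → ℝ)) (hφ : ContDiff ℝ 2 φ) (hψ : ContDiff ℝ 2 ψ)
    (hψφ : Function.LeftInverse ψ φ) (hφψ : Function.RightInverse ψ φ)
    (α α1 β β1 β2 : ι → Fin n → ℝ → ℝ)
    (hα : ∀ s j t, HasDerivAt (α s j) (α1 s j t) t)
    (hβ : ∀ s j t, HasDerivAt (β s j) (β1 s j t) t)
    (hβ1 : ∀ s j t, HasDerivAt (β1 s j) (β2 s j t) t)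
    (hid : ∀ s z, ∑ j, α s j (z (c j)) = ∑ j, β s j (φ z (c j)))
    (hli : ∀ y a b : Fin n → ℝ,
      (∀ s, (∑ j, β2 s j (y j) * a j) + ∑ j, β1 s j (y j) * b j = 0) →
      (∀ j, a j = 0) ∧ ∀ j, b j = 0) :
    ∃ (k : Fin n → Fin d) (hs : Fin n → ℝ → ℝ), (∀ j, k j ∈ Set.range c) ∧
      Function.Injective k ∧ (∀ j, IsC1Diffeo (hs j)) ∧
      ∀ z j, φ z (c j) = hs j (z (k j)) := by
  have hφd : Differentiable ℝ φ := hφ.differentiable (by norm_num)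
  have hψd : Differentiable ℝ ψ := hψ.differentiable (by norm_num)
  have hφ' : ContDiff ℝ 1 (fderiv ℝ φ) := hφ.fderiv_right (by norm_num)
  set D : (Fin d → ℝ) → Fin d → Fin d → ℝ :=
    fun z k i => fderiv ℝ φ z (Pi.single k 1) i with hD
  have hline : ∀ (z v : Fin d → ℝ), HasDerivAt (fun t : ℝ => z + t • v) v 0 := by
    intro z v
    simpa using ((hasDerivAt_id (0:ℝ)).smul_const v).const_add z
  have hφline : ∀ (z v : Fin d → ℝ) (i : Fin d),
      HasDerivAt (fun t : ℝ => φ (z + t • v) i) (fderiv ℝ φ z v i) 0 := by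
    intro z v i
    have h1 : HasFDerivAt φ (fderiv ℝ φ z) (z + (0:ℝ) • v) := by
      simpa using (hφd z).hasFDerivAt
    exact (hasDerivAt_pi.1 (h1.comp_hasDerivAt 0 (hline z v))) i
  have E1 : ∀ s z k, ∑ j, α1 s j (z (c j)) * (Pi.single k 1 : Fin d → ℝ) (c j) =
      ∑ j, β1 s j (φ z (c j)) * D z k (c j) := by
    intro s z k
    have hl : HasDerivAt (fun t : ℝ => ∑ j, α s j ((z + t • (Pi.single k 1 : Fin d → ℝ)) (c j)))
        (∑ j, α1 s j (z (c j)) * (Pi.single k 1 : Fin d → ℝ) (c j)) 0 := by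
      apply HasDerivAt.fun_sum
      intro j _
      have h2 := hasDerivAt_pi.1 (hline z (Pi.single k 1)) (c j)
      refine HasDerivAt.comp (0:ℝ) (h₂ := α s j) ?_ h2
      simpa using hα s j (z (c j))
    have hr : HasDerivAt (fun t : ℝ => ∑ j, β s j (φ (z + t • (Pi.single k 1 : Fin d → ℝ)) (c j)))
        (∑ j, β1 s j (φ z (c j)) * D z k (c j)) 0 := by
      apply HasDerivAt.fun_sum
      intro j _
      refine HasDerivAt.comp (0:ℝ) (h₂ := β s j) ?_ (hφline z _ (c j))
      simpa using hβ s j (φ z (c j))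
    simp only [hid] at hl
    exact hl.unique hr
  have hout : ∀ z k j, k ∉ Set.range c → D z k (c j) = 0 := by
    intro z k j hk
    refine (hli (fun j => φ z (c j)) 0 (fun j => D z k (c j)) ?_).2 j
    intro s
    rw [← E1 s z k]
    simp only [Pi.zero_apply, mul_zero, Finset.sum_const_zero, zero_add]
    apply Finset.sum_eq_zero
    intro j _
    rw [Pi.single_eq_of_ne, mul_zero]
    rintro rfl
    exact hk ⟨j, rfl⟩
  have hprod : ∀ z i k j, i ≠ k → D z i (c j) * D z k (c j) = 0 := by
    intro z i k j hik
    let D2 : Fin n → ℝ := fun j =>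
      fderiv ℝ (fderiv ℝ φ) z (Pi.single i 1) (Pi.single k 1) (c j)
    refine (hli (fun j => φ z (c j)) (fun j => D z i (c j) * D z k (c j)) D2 ?_).1 j
    intro s
    have hDline : ∀ j, HasDerivAt (fun t : ℝ => D (z + t • (Pi.single i 1 : Fin d → ℝ)) k (c j))
        (D2 j) 0 := by
      intro j
      have h1 : HasFDerivAt (fderiv ℝ φ) (fderiv ℝ (fderiv ℝ φ) z)
          (z + (0:ℝ) • (Pi.single i 1 : Fin d → ℝ)) := by
        simpa using ((hφ'.differentiable (by norm_num)) z).hasFDerivAt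
      have h2 := h1.comp_hasDerivAt 0 (hline z (Pi.single i 1))
      have h3 := h2.clm_apply (hasDerivAt_const (0:ℝ) (Pi.single k 1 : Fin d → ℝ))
      have h4 := hasDerivAt_pi.1 h3 (c j)
      simpa using h4
    have hr : HasDerivAt (fun t : ℝ => ∑ j,
        β1 s j (φ (z + t • (Pi.single i 1 : Fin d → ℝ)) (c j)) *
          D (z + t • (Pi.single i 1 : Fin d → ℝ)) k (c j))
        (∑ j, (β2 s j (φ z (c j)) * D z i (c j) * D z k (c j) +
          β1 s j (φ z (c j)) * D2 j)) 0 := by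
      apply HasDerivAt.fun_sum
      intro j _
      have h1 : HasDerivAt (fun t : ℝ => β1 s j (φ (z + t • (Pi.single i 1 : Fin d → ℝ)) (c j)))
          (β2 s j (φ z (c j)) * D z i (c j)) 0 := by
        refine HasDerivAt.comp (0:ℝ) (h₂ := β1 s j) ?_ (hφline z _ (c j))
        simpa using hβ1 s j (φ z (c j))
      simpa using h1.fun_mul (hDline j)
    have hconst : (fun t : ℝ => ∑ j,
        β1 s j (φ (z + t • (Pi.single i 1 : Fin d → ℝ)) (c j)) *
          D (z + t • (Pi.single i 1 : Fin d → ℝ)) k (c j)) =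
        fun _ => ∑ j, α1 s j (z (c j)) * (Pi.single k 1 : Fin d → ℝ) (c j) := by
      funext t
      rw [← E1 s (z + t • (Pi.single i 1 : Fin d → ℝ)) k]
      apply Finset.sum_congr rfl
      intro j _
      by_cases hj : c j = k
      · have : (Pi.single i 1 : Fin d → ℝ) (c j) = 0 :=
          Pi.single_eq_of_ne (by rw [hj]; exact hik.symm) _
        simp [this]
      · rw [Pi.single_eq_of_ne hj, mul_zero, mul_zero]
    rw [hconst] at hr
    have h0 := hr.unique (hasDerivAt_const (0:ℝ) _)
    rw [Finset.sum_add_distrib] at h0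
    simpa only [mul_assoc] using h0
  have hDsum : ∀ z v i, fderiv ℝ φ z v i = ∑ k, v k * D z k i := by
    intro z v i
    conv_lhs => rw [pi_eq_sum_univ' v]
    simp [hD, map_sum, Finset.sum_apply]
  have hex : ∀ z i, ∃ k, D z k i ≠ 0 := by
    intro z i
    by_contra hcon
    push Not at hcon
    have h1 : HasFDerivAt φ (fderiv ℝ φ z) (ψ (φ z)) := by
      rw [hψφ z]; exact (hφd z).hasFDerivAt
    have h2 := h1.comp (φ z) (hψd (φ z)).hasFDerivAt
    have h3 : φ ∘ ψ = id := funext hφψ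
    rw [h3] at h2
    have h4 := h2.unique (hasFDerivAt_id (φ z))
    have h5 := congrFun (congrArg (fun L : (Fin d → ℝ) →L[ℝ] (Fin d → ℝ) => L (Pi.single i 1)) h4) i
    simp only [ContinuousLinearMap.comp_apply] at h5
    rw [hDsum] at h5
    simp [hcon] at h5
  have hDc : ∀ k i, Continuous (fun z => D z k i) := by
    intro k i
    have := (hφ'.continuous.clm_apply (continuous_const (y := (Pi.single k 1 : Fin d → ℝ))))
    exact (continuous_apply i).comp this
  have hk : ∀ j, ∃ k, ∀ z, D z k (c j) ≠ 0 := by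
    intro j
    obtain ⟨k, hk⟩ := hex 0 (c j)
    refine ⟨k, ?_⟩
    have hopen : ∀ l, IsOpen {z | D z l (c j) ≠ 0} := fun l =>
      isOpen_ne_fun (hDc l (c j)) continuous_const
    have hcl : IsClopen {z | D z k (c j) ≠ 0} := by
      refine ⟨⟨?_⟩, hopen k⟩
      have : {z | D z k (c j) ≠ 0}ᶜ = ⋃ l ∈ {l | l ≠ k}, {z | D z l (c j) ≠ 0} := by
        ext z
        simp only [Set.mem_compl_iff, Set.mem_ofPred_eq, not_not, Set.mem_iUnion, exists_prop]
        constructor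
        · intro h
          obtain ⟨l, hl⟩ := hex z (c j)
          refine ⟨l, ?_, hl⟩
          rintro rfl
          exact hl h
        · rintro ⟨l, hlk, hl⟩
          exact (mul_eq_zero.1 (hprod z l k j hlk)).resolve_left hl
      rw [this]
      exact isOpen_biUnion (fun l _ => hopen l)
    have := hcl.eq_univ ⟨0, hk⟩
    intro z
    have hz : z ∈ {z | D z k (c j) ≠ 0} := by rw [this]; trivial
    exact hz
  choose k hk using hk
  have hz0 : ∀ j l z, l ≠ k j → D z l (c j) = 0 := fun j l z hl =>
    (mul_eq_zero.1 (hprod z l (k j) j hl)).resolve_right (hk j z)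
  have hline' : ∀ (z v : Fin d → ℝ) (i : Fin d) (t : ℝ),
      HasDerivAt (fun t : ℝ => φ (z + t • v) i) (fderiv ℝ φ (z + t • v) v i) t := by
    intro z v i t
    have h1 : HasDerivAt (fun t : ℝ => z + t • v) v t := by
      simpa using ((hasDerivAt_id t).smul_const v).const_add z
    exact (hasDerivAt_pi.1 ((hφd (z + t • v)).hasFDerivAt.comp_hasDerivAt t h1)) i
  have hdep : ∀ j z w, z (k j) = w (k j) → φ z (c j) = φ w (c j) := by
    intro j z w hzw
    have h1 := is_const_of_deriv_eq_zero (f := fun t : ℝ => φ (z + t • (w - z)) (c j))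
      (fun t => (hline' z (w - z) (c j) t).differentiableAt) (by
        intro t
        rw [(hline' z (w - z) (c j) t).deriv, hDsum]
        apply Finset.sum_eq_zero
        intro l _
        by_cases hl : l = k j
        · subst hl; simp [hzw]
        · rw [hz0 j l _ hl, mul_zero]) 0 1
    simpa using h1
  let hs : Fin n → ℝ → ℝ := fun j t => φ (0 + t • (Pi.single (k j) 1 : Fin d → ℝ)) (c j)
  have heq : ∀ z j, φ z (c j) = hs j (z (k j)) := by
    intro z j
    apply hdep
    simp
  have hsinj : ∀ j, Function.Injective (hs j) := by
    intro j
    have hne : ∀ t, deriv (hs j) t ≠ 0 := by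
      intro t
      rw [(hline' 0 (Pi.single (k j) 1) (c j) t).deriv]
      exact hk j _
    have hcont : Continuous (hs j) := continuous_iff_continuousAt.2 fun t =>
      (hline' 0 (Pi.single (k j) 1) (c j) t).continuousAt
    intro a b hab
    rcases lt_trichotomy a b with h | h | h
    · obtain ⟨x, _, hx⟩ := exists_deriv_eq_zero h hcont.continuousOn hab
      exact absurd hx (hne x)
    · exact h
    · obtain ⟨x, _, hx⟩ := exists_deriv_eq_zero h hcont.continuousOn hab.symm
      exact absurd hx (hne x)
  refine ⟨k, hs, ?_, ?_, ?_, heq⟩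
  · intro j
    by_contra h
    exact hk j 0 (hout 0 (k j) j h)
  · intro j j' hjj
    by_contra hne
    have h1 := heq (ψ 0) j
    have h2 := heq (ψ (Pi.single (c j') 1)) j
    have h3 := heq (ψ 0) j'
    have h4 := heq (ψ (Pi.single (c j') 1)) j'
    rw [hφψ] at h1 h2 h3 h4
    rw [Pi.single_eq_of_ne (fun h => hne (hc h))] at h2
    have h5 := hsinj j (h2.symm.trans h1)
    rw [hjj] at h5
    rw [h5, ← h3] at h4
    simp at h4
  · intro j
    refine ⟨?_, fun t => ψ (0 + t • (Pi.single (c j) 1 : Fin d → ℝ)) (k j), ?_, ?_⟩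
    · have h1 : ContDiff ℝ 1 (fun t : ℝ => φ (0 + t • (Pi.single (k j) 1 : Fin d → ℝ))) :=
        (hφ.of_le (by norm_num)).comp (by fun_prop)
      exact contDiff_pi.1 h1 (c j)
    · have h1 : ContDiff ℝ 1 (fun t : ℝ => ψ (0 + t • (Pi.single (c j) 1 : Fin d → ℝ))) :=
        (hψ.of_le (by norm_num)).comp (by fun_prop)
      exact contDiff_pi.1 h1 (k j)
    · have hR : ∀ t, hs j (ψ (0 + t • (Pi.single (c j) 1 : Fin d → ℝ)) (k j)) = t := by
        intro t
        rw [← heq, hφψ]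
        simp
      exact ⟨fun t => hsinj j (hR _), hR⟩

lemma logDeriv_hasDerivAt {r : ℝ → ℝ} (h : IsC2Density r) (t : ℝ) :
    HasDerivAt (fun x => Real.log (r x)) (deriv r t / r t) t :=
  ((h.2.1.differentiable (by norm_num)) t).hasDerivAt.log (h.1 t).ne'

lemma logDeriv2_hasDerivAt {r : ℝ → ℝ} (h : IsC2Density r) (t : ℝ) :
    HasDerivAt (fun x => deriv r x / r x) (deriv (fun x => deriv r x / r x) t) t := by
  apply DifferentiableAt.hasDerivAt
  have h1 : ContDiff ℝ 1 (deriv r) := ((contDiff_succ_iff_deriv (n := 1)).1 h.2.1).2.2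
  exact ((h1.differentiable (by norm_num)) t).div
    ((h.2.1.differentiable (by norm_num)) t) (h.1 t).ne'

/-- **Proposition (block-variability: identifiability up to permutation and scaling within a
block).** Under the hypotheses of the fat-hand block-identifiability theorem, with all
densities and diffeomorphisms additionally C², suppose that for some target set `τ0 ∈ T`
with `n := |τ0|` there are `2n` further perfect interventional regimes with target `τ0`
whose intervened block densities factorize into strictly positive C² marginals (in both
models, with matching pushforwards), the unintervened block mechanism also factorizes into
marginals `u0` (resp. `u0'`), and for every block configuration the vectors
`w(z_τ, s) − w(z_τ, 0)`, `s = 1, …, 2n`, are linearly independent. Then the induced block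
map `φ_τ0` of `φ := f′⁻¹ ∘ f` belongs to `S_reparam` on `ℝ^n`: there are a permutation `π`
of the block coordinates and C¹ diffeomorphisms `hs j` of `ℝ` with
`φ_τ0(y) j = hs j (y (π j))`. -/
theorem ica_block_variability_reparam {d : ℕ}
    (pa : Fin d → Finset (Fin d))
    (hpa : ∀ i : Fin d, ∀ j ∈ pa i, j < i)
    (p q : Fin d → (Fin d → ℝ) → ℝ)
    (hp : IsCondFamily2 pa p) (hq : IsCondFamily2 pa q)
    (T : Finset (Finset (Fin d)))
    (hcover : ∀ i : Fin d, ∃ τ ∈ T, i ∈ τ)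
    (hstrict : ∀ τ ∈ T, τ ≠ Finset.univ)
    (f f' g' : (Fin d → ℝ) → (Fin d → ℝ))
    (hf : IsC2Diffeo f) (hf' : ContDiff ℝ 2 f') (hg' : ContDiff ℝ 2 g')
    (hinv₁ : Function.LeftInverse g' f') (hinv₂ : Function.RightInverse g' f')
    (r r' : (τ : Finset (Fin d)) → Fin τ.card → (Fin d → ℝ) → ℝ)
    (r0 r0' : (τ : Finset (Fin d)) → (Fin d → ℝ) → ℝ)
    (hr : ∀ τ ∈ T, ∀ s : Fin τ.card, IsBlockDensity2 τ (r τ s))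
    (hr' : ∀ τ ∈ T, ∀ s : Fin τ.card, IsBlockDensity2 τ (r' τ s))
    (hbase : ∀ τ ∈ T, (∀ i ∈ τ, pa i ⊆ τ) →
        r0 τ = blockMech p τ ∧ r0' τ = blockMech q τ)
    (hbase' : ∀ τ ∈ T, ¬(∀ i ∈ τ, pa i ⊆ τ) →
        IsBlockDensity2 τ (r0 τ) ∧ IsBlockDensity2 τ (r0' τ) ∧
        Measure.map f (densityMeasure fun z => r0 τ z * ∏ i ∈ τᶜ, p i z) =
          Measure.map f' (densityMeasure fun z => r0' τ z * ∏ i ∈ τᶜ, q i z))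
    (hdiscp : ∀ τ ∈ T, ∀ᵐ (z : Fin d → ℝ) ∂volume,
        LinearIndependent ℝ (fun s : Fin τ.card => fun j : Fin τ.card =>
          fderiv ℝ (fun w => Real.log (r τ s w) - Real.log (r0 τ w)) z
            (Pi.single (coordOf τ j) 1)))
    (hdiscq : ∀ τ ∈ T, ∀ᵐ (z : Fin d → ℝ) ∂volume,
        LinearIndependent ℝ (fun s : Fin τ.card => fun j : Fin τ.card =>
          fderiv ℝ (fun w => Real.log (r' τ s w) - Real.log (r0' τ w)) z
            (Pi.single (coordOf τ j) 1)))
    (hmatch0 : Measure.map f (densityMeasure (jointDensity p)) =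
        Measure.map f' (densityMeasure (jointDensity q)))
    (hmatch : ∀ τ ∈ T, ∀ s : Fin τ.card,
        Measure.map f (densityMeasure fun z => r τ s z * ∏ i ∈ τᶜ, p i z) =
        Measure.map f' (densityMeasure fun z => r' τ s z * ∏ i ∈ τᶜ, q i z))
    -- the distinguished block `τ0` with `2 n` further factorized interventional regimes
    (τ0 : Finset (Fin d)) (hτ0 : τ0 ∈ T)
    (uu uu' : Fin (2 * τ0.card) → Fin τ0.card → ℝ → ℝ)
    (huu : ∀ s j, IsC2Density (uu s j)) (huu' : ∀ s j, IsC2Density (uu' s j))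
    (hmatch2 : ∀ s : Fin (2 * τ0.card),
        Measure.map f (densityMeasure fun z =>
            (∏ j : Fin τ0.card, uu s j (z (coordOf τ0 j))) * ∏ i ∈ τ0ᶜ, p i z) =
        Measure.map f' (densityMeasure fun z =>
            (∏ j : Fin τ0.card, uu' s j (z (coordOf τ0 j))) * ∏ i ∈ τ0ᶜ, q i z))
    (u0 u0' : Fin τ0.card → ℝ → ℝ)
    (hu0 : ∀ j, IsC2Density (u0 j)) (hu0' : ∀ j, IsC2Density (u0' j))
    (hfac : ∀ z : Fin d → ℝ,
        blockMech p τ0 z = ∏ j : Fin τ0.card, u0 j (z (coordOf τ0 j)))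
    (hfac' : ∀ z : Fin d → ℝ,
        blockMech q τ0 z = ∏ j : Fin τ0.card, u0' j (z (coordOf τ0 j)))
    (hvar : ∀ y : {x // x ∈ τ0} → ℝ,
        LinearIndependent ℝ (fun s : Fin (2 * τ0.card) =>
          wVec τ0 (uu s) y - wVec τ0 u0 y))
    (hvar' : ∀ y : {x // x ∈ τ0} → ℝ,
        LinearIndependent ℝ (fun s : Fin (2 * τ0.card) =>
          wVec τ0 (uu' s) y - wVec τ0 u0' y)) :
    ∃ (π : Equiv.Perm (Fin τ0.card)) (hs : Fin τ0.card → ℝ → ℝ),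
      (∀ j, IsC1Diffeo (hs j)) ∧
      ∀ (y : {x // x ∈ τ0} → ℝ) (j : Fin τ0.card),
        blockMap (fun z => g' (f z)) τ0 y (τ0.equivFin.symm j) =
          hs j (y (τ0.equivFin.symm (π j))) := by
  obtain ⟨hfc, g, hgc, hgf, hfg⟩ := hf
  have hpc : ∀ i, Continuous (p i) := fun i => (hp i).2.1.continuous
  have hqc : ∀ i, Continuous (q i) := fun i => (hq i).2.1.continuous
  have hj : ∀ (p : Fin d → (Fin d → ℝ) → ℝ) (z : Fin d → ℝ),
      jointDensity p z = blockMech p τ0 z * ∏ i ∈ τ0ᶜ, p i z := by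
    intro p z
    exact (Finset.prod_mul_prod_compl τ0 (fun i => p i z)).symm
  have hprodpos : ∀ (u : Fin τ0.card → ℝ → ℝ), (∀ j, IsC2Density (u j)) → ∀ z : Fin d → ℝ,
      0 < ∏ j, u j (z (coordOf τ0 j)) :=
    fun u hu z => Finset.prod_pos fun j _ => (hu j).1 _
  have hprodc : ∀ (u : Fin τ0.card → ℝ → ℝ), (∀ j, IsC2Density (u j)) →
      Continuous fun z : Fin d → ℝ => ∏ j, u j (z (coordOf τ0 j)) :=
    fun u hu => continuous_finsetProd _ fun j _ =>
      (hu j).2.1.continuous.comp (continuous_apply _)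
  have hPpos : ∀ z, 0 < ∏ i ∈ τ0ᶜ, p i z := fun z => Finset.prod_pos fun i _ => (hp i).1 z
  have hQpos : ∀ z, 0 < ∏ i ∈ τ0ᶜ, q i z := fun z => Finset.prod_pos fun i _ => (hq i).1 z
  have hPc : Continuous fun z => ∏ i ∈ τ0ᶜ, p i z := continuous_finsetProd _ fun i _ => hpc i
  have hQc : Continuous fun z => ∏ i ∈ τ0ᶜ, q i z := continuous_finsetProd _ fun i _ => hqc i
  have hjp : jointDensity p = fun z => (∏ j, u0 j (z (coordOf τ0 j))) * ∏ i ∈ τ0ᶜ, p i z := by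
    funext z; rw [hj, hfac]
  have hjq : jointDensity q = fun z => (∏ j, u0' j (z (coordOf τ0 j))) * ∏ i ∈ τ0ᶜ, q i z := by
    funext z; rw [hj, hfac']
  rw [hjp, hjq] at hmatch0
  have hid : ∀ s z,
      ∑ j, (Real.log (uu s j (z (coordOf τ0 j))) - Real.log (u0 j (z (coordOf τ0 j)))) =
      ∑ j, (Real.log (uu' s j (g' (f z) (coordOf τ0 j))) -
        Real.log (u0' j (g' (f z) (coordOf τ0 j)))) := by
    intro s z
    have h := ratio_transport f f' g g' hfc.continuous hf'.continuous hgc.continuous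
      hg'.continuous hgf hinv₁ hinv₂ _ _ _ _
      ((hprodc u0 hu0).mul hPc) ((hprodc (uu s) (huu s)).mul hPc)
      ((hprodc u0' hu0').mul hQc) ((hprodc (uu' s) (huu' s)).mul hQc)
      (fun z => mul_pos (hprodpos u0 hu0 z) (hPpos z))
      (fun z => mul_pos (hprodpos (uu s) (huu s) z) (hPpos z))
      (fun z => mul_pos (hprodpos u0' hu0' z) (hQpos z))
      (fun z => mul_pos (hprodpos (uu' s) (huu' s) z) (hQpos z))
      hmatch0 (hmatch2 s) z
    simp only [Pi.mul_apply] at h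
    rw [mul_div_mul_right _ _ (hPpos z).ne', mul_div_mul_right _ _ (hQpos _).ne'] at h
    have h2 := congrArg Real.log h
    rw [Real.log_div (hprodpos (uu s) (huu s) z).ne' (hprodpos u0 hu0 z).ne',
      Real.log_div (hprodpos (uu' s) (huu' s) _).ne' (hprodpos u0' hu0' _).ne',
      Real.log_prod (fun j _ => ((huu s j).1 _).ne'),
      Real.log_prod (fun j _ => ((hu0 j).1 _).ne'),
      Real.log_prod (fun j _ => ((huu' s j).1 _).ne'),
      Real.log_prod (fun j _ => ((hu0' j).1 _).ne')] at h2
    rw [Finset.sum_sub_distrib, Finset.sum_sub_distrib]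
    exact h2
  obtain ⟨k, hs, hkr, hkinj, hdiff, heq⟩ := ica_core (coordOf τ0)
    (fun a b hab => τ0.equivFin.symm.injective (Subtype.ext hab))
    (fun z => g' (f z)) (fun z => g (f' z)) (hg'.comp hfc) (hgc.comp hf')
    (fun z => by simp only [hinv₂ (f z), hgf z])
    (fun z => by simp only [hfg (f' z), hinv₁ z])
    (fun s j t => Real.log (uu s j t) - Real.log (u0 j t))
    (fun s j t => deriv (uu s j) t / uu s j t - deriv (u0 j) t / u0 j t)
    (fun s j t => Real.log (uu' s j t) - Real.log (u0' j t))
    (fun s j t => deriv (uu' s j) t / uu' s j t - deriv (u0' j) t / u0' j t)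
    (fun s j t => deriv (fun x => deriv (uu' s j) x / uu' s j x) t -
      deriv (fun x => deriv (u0' j) x / u0' j x) t)
    (fun s j t => (logDeriv_hasDerivAt (huu s j) t).sub (logDeriv_hasDerivAt (hu0 j) t))
    (fun s j t => (logDeriv_hasDerivAt (huu' s j) t).sub (logDeriv_hasDerivAt (hu0' j) t))
    (fun s j t => (logDeriv2_hasDerivAt (huu' s j) t).sub (logDeriv2_hasDerivAt (hu0' j) t))
    hid
    (by
      intro y a b h
      apply functional_zero _ (hvar' (fun x => y (τ0.equivFin x)))
      intro s
      simpa [wVec] using h s)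
  choose π0 hπ0 using hkr
  have hπinj : Function.Injective π0 := by
    intro a b hab
    apply hkinj
    rw [← hπ0 a, ← hπ0 b, hab]
  refine ⟨Equiv.ofBijective π0 (Finite.injective_iff_bijective.1 hπinj), hs, hdiff, ?_⟩
  intro y j
  have h := heq (fillBlock τ0 y) j
  rw [← hπ0 j] at h
  have h2 : fillBlock τ0 y (coordOf τ0 (π0 j)) = y (τ0.equivFin.symm (π0 j)) := by
    simp [fillBlock, coordOf]
  rw [h2] at h
  exact h
end
end

section
/- Let G be a DAG on [d], let (p_i), (q_i) be C¹ conditional-density families for G, and let σ be an automorphism of G. For each k ∈ [d] let the first model carry a stochastic intervention p̃_k on node k that is either perfect (pa^k(k) = ∅) or structure-preserving (pa^k(k) = pa(k)), and let the second model carry a matching intervention q̃_{σ(k)} on node σ(k) of the same kind, yielding interventional joint densities p^k and q^k (and unintervened p^0, q^0). Assume the general interventional discrepancy holds in both models for every k. Let f, f′ : ℝ^d → ℝ^d be C¹ diffeomorphisms with f_*P^k = f′_*Q^k for all k ∈ {0,…,d}, and set φ := f′⁻¹∘f. Then for every i ∈ [d] and every j ∉ anc̄(i), the partial derivative ∂φ_{σ(i)}/∂z_j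 vanishes identically on ℝ^d; equivalently, φ = P_σ ∘ h where P_σ is the permutation matrix of σ and each component h_i of the C¹ diffeomorphism h depends only on z_{anc̄(i)}. -/
open MeasureTheory

noncomputable section

theorem aux_ratio_s14 {d : ℕ} (φ ψ : (Fin d → ℝ) → (Fin d → ℝ))
    (hφ : Continuous φ) (hψ : Continuous ψ)
    (h1 : Function.LeftInverse ψ φ)
    (P0 Pk Q0 Qk : (Fin d → ℝ) → ℝ)
    (cP0 : Continuous P0) (cPk : Continuous Pk) (cQ0 : Continuous Q0) (cQk : Continuous Qk)
    (pP0 : ∀ z, 0 < P0 z) (pPk : ∀ z, 0 < Pk z) (pQ0 : ∀ z, 0 < Q0 z) (pQk : ∀ z, 0 < Qk z)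
    (e0 : Measure.map φ (densityMeasure P0) = densityMeasure Q0)
    (ek : Measure.map φ (densityMeasure Pk) = densityMeasure Qk) :
    ∀ z, Pk z * Q0 (φ z) = P0 z * Qk (φ z) := by
  have hs : Continuous fun w => Qk w / Q0 w := cQk.div cQ0 fun w => (pQ0 w).ne'
  have hsφ : Continuous fun z => P0 z * (Qk (φ z) / Q0 (φ z)) := cP0.mul (hs.comp hφ)
  have key : Measure.map φ (densityMeasure fun z => P0 z * (Qk (φ z) / Q0 (φ z))) =
      Measure.map φ (densityMeasure Pk) := by
    rw [ek]
    have a : densityMeasure (fun z => P0 z * (Qk (φ z) / Q0 (φ z))) =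
        (densityMeasure P0).withDensity
          ((fun w => ENNReal.ofReal (Qk w / Q0 w)) ∘ φ) := by
      unfold densityMeasure
      rw [← withDensity_mul _ cP0.measurable.ennreal_ofReal
        ((hs.measurable.ennreal_ofReal).comp hφ.measurable)]
      congr 1
      funext z
      simp [ENNReal.ofReal_mul (pP0 z).le]
    have b : densityMeasure Qk = (densityMeasure Q0).withDensity
        (fun w => ENNReal.ofReal (Qk w / Q0 w)) := by
      unfold densityMeasure
      rw [← withDensity_mul _ cQ0.measurable.ennreal_ofReal hs.measurable.ennreal_ofReal]
      congr 1
      funext z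
      simp only [Pi.mul_apply]
      rw [← ENNReal.ofReal_mul (pQ0 z).le, mul_div_cancel₀ _ (pQ0 z).ne']
    rw [a, b, ← e0]
    ext s hs'
    rw [Measure.map_apply hφ.measurable hs', withDensity_apply _ hs',
      withDensity_apply _ (hφ.measurable hs'),
      setLIntegral_map hs' hs.measurable.ennreal_ofReal hφ.measurable]
    rfl
  have key2 := congrArg (Measure.map ψ) key
  rw [Measure.map_map hψ.measurable hφ.measurable, Measure.map_map hψ.measurable hφ.measurable,
    h1.id, Measure.map_id, Measure.map_id] at key2
  unfold densityMeasure at key2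
  rw [withDensity_eq_iff_of_sigmaFinite hsφ.measurable.ennreal_ofReal.aemeasurable
    cPk.measurable.ennreal_ofReal.aemeasurable] at key2
  have key3 := (Continuous.ae_eq_iff_eq volume (ENNReal.continuous_ofReal.comp hsφ)
    (ENNReal.continuous_ofReal.comp cPk)).1 key2
  intro z
  have h := congrFun key3 z
  simp only [Function.comp] at h
  rw [ENNReal.ofReal_eq_ofReal_iff
    (mul_nonneg (pP0 z).le (div_nonneg (pQk _).le (pQ0 _).le)) (pPk z).le] at h
  rw [← h]
  have := (pQ0 (φ z)).ne'
  field_simp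

theorem aux_fderiv {d : ℕ} (S : (Fin d → ℝ) → ℝ) (T : Finset (Fin d))
    (hS : DependsOnlyOn S T) (dS : Differentiable ℝ S) (z v : Fin d → ℝ)
    (hv : ∀ l ∈ T, v l = 0) : fderiv ℝ S z v = 0 := by
  rw [← (dS z).lineDeriv_eq_fderiv]
  unfold lineDeriv
  have : (fun t : ℝ => S (z + t • v)) = fun _ => S z := by
    funext t
    exact hS _ _ fun l hl => by simp [hv l hl]
  rw [this]
  simp

/-- **Theorem (known targets up to graph automorphisms, part (i)).** Two models over the same
DAG, where `σ` is a graph automorphism; for each node `k` the first model carries a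
stochastic intervention on node `k` that is either perfect (`pak k = ∅`) or
structure-preserving (`pak k = pa k`), and the second model carries a matching intervention
of the same kind on node `σ k` (whose post-intervention parent set is the `σ`-image of the
first model's). Under the general interventional discrepancy in both models and matching
pushforwards in all regimes, `φ := f′⁻¹ ∘ f` satisfies `∂φ (σ i) / ∂z j ≡ 0` for every
`j ∉ anc̄(i)`; i.e. `φ = P_σ ∘ h` with each component `h i` depending only on the ancestral
closure of `i`. -/
theorem cauca_automorphism_ancestral_identifiability {d : ℕ}
    (pa : Fin d → Finset (Fin d))
    (hpa : ∀ i : Fin d, ∀ j ∈ pa i, j < i)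
    (σ : Equiv.Perm (Fin d))
    (hσ : ∀ i j : Fin d, j ∈ pa i ↔ σ j ∈ pa (σ i))
    (p q : Fin d → (Fin d → ℝ) → ℝ)
    (hp : IsCondFamily pa p) (hq : IsCondFamily pa q)
    (pak : Fin d → Finset (Fin d))
    (hkind : ∀ k : Fin d, pak k = ∅ ∨ pak k = pa k)
    (pt qt : Fin d → (Fin d → ℝ) → ℝ)
    (hpt : ∀ k : Fin d, (∀ z, 0 < pt k z) ∧ ContDiff ℝ 1 (pt k) ∧
        DependsOnlyOn (pt k) (insert k (pak k)) ∧
        ∀ z, (∫ t : ℝ, pt k (Function.update z k t)) = 1)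
    (hqt : ∀ k : Fin d, (∀ z, 0 < qt k z) ∧ ContDiff ℝ 1 (qt k) ∧
        DependsOnlyOn (qt k) (insert (σ k) ((pak k).image σ)) ∧
        ∀ z, (∫ t : ℝ, qt k (Function.update z (σ k) t)) = 1)
    (hdiscp : ∀ k i : Fin d, ∀ᵐ (z : Fin d → ℝ) ∂volume,
        fderiv ℝ (fun w => Real.log (p i w)) z (Pi.single i 1) ≠
          fderiv ℝ (fun w => Real.log (pt k w)) z (Pi.single k 1))
    (hdiscq : ∀ k i : Fin d, ∀ᵐ (z : Fin d → ℝ) ∂volume,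
        fderiv ℝ (fun w => Real.log (q i w)) z (Pi.single i 1) ≠
          fderiv ℝ (fun w => Real.log (qt k w)) z (Pi.single (σ k) 1))
    (f f' g' : (Fin d → ℝ) → (Fin d → ℝ))
    (hf : IsC1Diffeo f) (hf' : ContDiff ℝ 1 f') (hg' : ContDiff ℝ 1 g')
    (hinv₁ : Function.LeftInverse g' f') (hinv₂ : Function.RightInverse g' f')
    (hmatch0 : Measure.map f (densityMeasure (jointDensity p)) =
        Measure.map f' (densityMeasure (jointDensity q)))
    (hmatch : ∀ k : Fin d,
        Measure.map f (densityMeasure fun z =>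
            pt k z * ∏ i ∈ ({k} : Finset (Fin d))ᶜ, p i z) =
        Measure.map f' (densityMeasure fun z =>
            qt k z * ∏ i ∈ ({σ k} : Finset (Fin d))ᶜ, q i z)) :
    ∀ i j : Fin d, ¬(IsAnc pa j i ∨ j = i) →
      ∀ z : Fin d → ℝ, fderiv ℝ (fun w => g' (f w) (σ i)) z (Pi.single j 1) = 0 := by
  obtain ⟨hf1, g, hg1, hgl, hgr⟩ := hf
  set φ : (Fin d → ℝ) → (Fin d → ℝ) := fun w => g' (f w) with hφdef
  set ψ : (Fin d → ℝ) → (Fin d → ℝ) := fun w => g (f' w) with hψdef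
  have cφ : ContDiff ℝ 1 φ := hg'.comp hf1
  have cψ : ContDiff ℝ 1 ψ := hg1.comp hf'
  have hl : Function.LeftInverse ψ φ := fun z => by simp [φ, ψ, hinv₂ (f z), hgl z]
  have push : ∀ μ ν : Measure (Fin d → ℝ), Measure.map f μ = Measure.map f' ν →
      Measure.map φ μ = ν := by
    intro μ ν h
    have h2 := congrArg (Measure.map g') h
    rw [Measure.map_map hg'.continuous.measurable hf1.continuous.measurable,
      Measure.map_map hg'.continuous.measurable hf'.continuous.measurable,
      hinv₁.id, Measure.map_id] at h2
    exact h2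
  have ratio : ∀ k z, Real.log (pt k z) - Real.log (p k z) =
      Real.log (qt k (φ z)) - Real.log (q (σ k) (φ z)) := by
    intro k z
    have cp : ∀ i, Continuous (p i) := fun i => (hp i).2.1.continuous
    have cq : ∀ i, Continuous (q i) := fun i => (hq i).2.1.continuous
    have h := aux_ratio_s14 φ ψ cφ.continuous cψ.continuous hl _ _ _ _
      (continuous_finsetProd _ fun i _ => cp i)
      ((hpt k).2.1.continuous.mul (continuous_finsetProd _ fun i _ => cp i))
      (continuous_finsetProd _ fun i _ => cq i)
      ((hqt k).2.1.continuous.mul (continuous_finsetProd _ fun i _ => cq i))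
      (fun z => Finset.prod_pos fun i _ => (hp i).1 z)
      (fun z => mul_pos ((hpt k).1 z) (Finset.prod_pos fun i _ => (hp i).1 z))
      (fun z => Finset.prod_pos fun i _ => (hq i).1 z)
      (fun z => mul_pos ((hqt k).1 z) (Finset.prod_pos fun i _ => (hq i).1 z))
      (push _ _ hmatch0) (push _ _ (hmatch k)) z
    have e1 : ∏ i, p i z = p k z * ∏ i ∈ ({k} : Finset (Fin d))ᶜ, p i z :=
      Fintype.prod_eq_mul_prod_compl k _
    have e2 : ∏ i, q i (φ z) = q (σ k) (φ z) * ∏ i ∈ ({σ k} : Finset (Fin d))ᶜ, q i (φ z) :=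
      Fintype.prod_eq_mul_prod_compl (σ k) _
    rw [e1, e2] at h
    simp only [Pi.mul_apply] at h
    have a1 : 0 < ∏ i ∈ ({k} : Finset (Fin d))ᶜ, p i z :=
      Finset.prod_pos fun i _ => (hp i).1 z
    have a2 : 0 < ∏ i ∈ ({σ k} : Finset (Fin d))ᶜ, q i (φ z) :=
      Finset.prod_pos fun i _ => (hq i).1 _
    have b1 := (hpt k).1 z
    have b2 := (hqt k).1 (φ z)
    have b3 := (hp k).1 z
    have b4 := (hq (σ k)).1 (φ z)
    have h' : pt k z * q (σ k) (φ z) = p k z * qt k (φ z) := by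
      apply mul_right_cancel₀ (mul_pos a1 a2).ne'
      linarith
    have h2 := congrArg Real.log h'
    rw [Real.log_mul b1.ne' b4.ne', Real.log_mul b3.ne' b2.ne'] at h2
    linarith
  have dlp : ∀ i, Differentiable ℝ fun w => Real.log (p i w) := fun i =>
    ((hp i).2.1.differentiable one_ne_zero).log fun w => ((hp i).1 w).ne'
  have dlq : ∀ i, Differentiable ℝ fun w => Real.log (q i w) := fun i =>
    ((hq i).2.1.differentiable one_ne_zero).log fun w => ((hq i).1 w).ne'
  have dlpt : ∀ i, Differentiable ℝ fun w => Real.log (pt i w) := fun i =>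
    ((hpt i).2.1.differentiable one_ne_zero).log fun w => ((hpt i).1 w).ne'
  have dlqt : ∀ i, Differentiable ℝ fun w => Real.log (qt i w) := fun i =>
    ((hqt i).2.1.differentiable one_ne_zero).log fun w => ((hqt i).1 w).ne'
  have dφ : Differentiable ℝ φ := cφ.differentiable one_ne_zero
  have hpaksub : ∀ k, pak k ⊆ pa k := fun k => by
    rcases hkind k with h | h <;> simp [h]
  have hcomp : ∀ (m : Fin d) (z v : Fin d → ℝ),
      fderiv ℝ (fun w => g' (f w) m) z v = fderiv ℝ φ z v m := by
    intro m z v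
    have h1 : HasFDerivAt (fun w => φ w m)
        ((ContinuousLinearMap.proj (R := ℝ) (φ := fun _ : Fin d => ℝ) m).comp (fderiv ℝ φ z)) z :=
      hasFDerivAt_pi'.1 (dφ z).hasFDerivAt m
    have h2 := h1.fderiv
    simp only [φ] at h2 ⊢
    rw [h2]
    rfl
  intro i
  induction i using WellFoundedLT.induction with
  | ind k ih =>
  intro j hj
  push Not at hj
  -- the two log-ratios
  let R : (Fin d → ℝ) → ℝ := fun w => Real.log (pt k w) - Real.log (p k w)
  let S : (Fin d → ℝ) → ℝ := fun w => Real.log (qt k w) - Real.log (q (σ k) w)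
  have dS : Differentiable ℝ S := (dlqt k).sub (dlq (σ k))
  have dR : Differentiable ℝ R := (dlpt k).sub (dlp k)
  have hR : DependsOnlyOn R (insert k (pa k)) := by
    intro z w h
    have h1 := (hpt k).2.2.1 z w fun i hi => h i (Finset.insert_subset_insert _ (hpaksub k) hi)
    have h2 := (hp k).2.2.1 z w h
    simp only [R, h1, h2]
  have hS : DependsOnlyOn S (insert (σ k) (pa (σ k))) := by
    intro z w h
    have h1 := (hqt k).2.2.1 z w fun i hi => h i (by
      rcases Finset.mem_insert.1 hi with hi | hi
      · simp [hi]
      · obtain ⟨a, ha, rfl⟩ := Finset.mem_image.1 hi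
        exact Finset.mem_insert_of_mem ((hσ k a).1 (hpaksub k ha)))
    have h2 := (hq (σ k)).2.2.1 z w h
    simp only [S, h1, h2]
  have hRS : R = S ∘ φ := funext fun z => ratio k z
  have prodzero : ∀ z, fderiv ℝ φ z (Pi.single j 1) (σ k) *
      fderiv ℝ S (φ z) (Pi.single (σ k) 1) = 0 := by
    intro z
    set v := fderiv ℝ φ z (Pi.single j 1) with hv
    have h0 : fderiv ℝ R z (Pi.single j 1) = 0 := by
      apply aux_fderiv R _ hR dR
      intro l hl
      have : l ≠ j := by
        rintro rfl
        rcases Finset.mem_insert.1 hl with h | h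
        · exact hj.2 h
        · exact hj.1 (Relation.TransGen.single h)
      simp [this]
    rw [hRS, fderiv_comp z (dS _) (dφ z)] at h0
    have h0' : fderiv ℝ S (φ z) v = 0 := h0
    have h1 : fderiv ℝ S (φ z) (v - v (σ k) • Pi.single (σ k) (1 : ℝ)) = 0 := by
      apply aux_fderiv S _ hS dS
      intro l hl
      by_cases hlk : l = σ k
      · subst hlk; simp
      · have hl' : l ∈ pa (σ k) := by simpa [hlk] using hl
        obtain ⟨a, rfl⟩ := σ.surjective l
        have ha : a ∈ pa k := (hσ k a).2 hl'
        have h := ih a (hpa k a ha) j (by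
          rintro (h | h)
          · exact hj.1 (h.tail ha)
          · exact hj.1 (h ▸ Relation.TransGen.single ha)) z
        rw [hcomp] at h
        have hne : σ a ≠ σ k := hlk
        simp [hne, hv, h]
    rw [map_sub, map_smul, h0', zero_sub, neg_eq_zero, smul_eq_mul] at h1
    exact h1
  have hae : ∀ᵐ z : Fin d → ℝ, fderiv ℝ S (φ z) (Pi.single (σ k) 1) ≠ 0 := by
    have hN := hdiscq k (σ k)
    rw [ae_iff] at hN
    have hN2 := addHaar_image_eq_zero_of_differentiableOn_of_addHaar_eq_zero volume
      ((cψ.differentiable one_ne_zero).differentiableOn) hN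
    rw [ae_iff]
    refine measure_mono_null ?_ hN2
    intro z hz
    refine ⟨φ z, ?_, hl z⟩
    simp only [Set.mem_setOf_eq, not_not] at hz ⊢
    have : fderiv ℝ S (φ z) = fderiv ℝ (fun w => Real.log (qt k w)) (φ z) -
        fderiv ℝ (fun w => Real.log (q (σ k) w)) (φ z) :=
      fderiv_sub (dlqt k _) (dlq (σ k) _)
    rw [this, sub_apply, sub_eq_zero] at hz
    exact hz.symm
  have hcont : Continuous fun z => fderiv ℝ φ z (Pi.single j 1) (σ k) :=
    (continuous_apply _).comp ((cφ.continuous_fderiv one_ne_zero).clm_apply continuous_const)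
  have hzero : (fun z => fderiv ℝ φ z (Pi.single j 1) (σ k)) =ᵐ[volume] fun _ => (0 : ℝ) := by
    filter_upwards [hae] with z hz
    exact (mul_eq_zero.1 (prodzero z)).resolve_right hz
  have := (Continuous.ae_eq_iff_eq volume hcont continuous_const).1 hzero
  intro z
  rw [hcomp]
  exact congrFun this z
end
end

section
/- Let G be a DAG on [d], let (p_i), (q_i) be C¹ conditional-density families for G, and let σ be an automorphism of G. For each k ∈ [d] let the first model carry a perfect stochastic intervention p̃_k on node k (a strictly positive C¹ density on ℝ depending on z_k only) and the second model a perfect intervention q̃_{σ(k)} on node σ(k), yielding interventional joints p^k and q^k; assume the general interventional discrepancy holds in both models for every k. Let f, f′ : ℝ^d → ℝ^d be C¹ diffeomorphisms with f_*P^k = f′_*Q^k for all k ∈ {0,…,d}. Then φ := f′⁻¹∘f = P_σ ∘ h, where P_σ is the permutation matrix of σ and h ∈ S_scaling; in particular, CauCA with intervention targets known up to graph automorphisms is identifiable up to composition of an automorphism permutation with elementwise C¹ diffeomorphisms. -/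
open MeasureTheory

noncomputable section

lemma aux_transport {d : ℕ} (φ φi : (Fin d → ℝ) → (Fin d → ℝ)) (hφ : ContDiff ℝ 1 φ)
    (hφi : ContDiff ℝ 1 φi) (h1 : Function.LeftInverse φi φ) (h2 : Function.RightInverse φi φ)
    (a b : (Fin d → ℝ) → ℝ) (ha : Continuous a) (hb : Continuous b)
    (ha0 : ∀ z, 0 ≤ a z) (hb0 : ∀ z, 0 ≤ b z)
    (h : Measure.map φ (densityMeasure a) = densityMeasure b) (z : Fin d → ℝ) :
    a z = |(fderiv ℝ φ z).det| * b (φ z) := by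
  have hcd : Continuous fun z => |(fderiv ℝ φ z).det| * b (φ z) := by
    have h3 : Continuous (fderiv ℝ φ) := hφ.continuous_fderiv one_ne_zero
    have h4 : Continuous fun z => (fderiv ℝ φ z).det :=
      ContinuousLinearMap.continuous_det.comp h3
    exact h4.abs.mul (hb.comp hφ.continuous)
  have key : (volume : Measure (Fin d → ℝ)).withDensity (fun z => ENNReal.ofReal (a z)) =
      volume.withDensity (fun z => ENNReal.ofReal (|(fderiv ℝ φ z).det| * b (φ z))) := by
    ext A hA
    have himg : φ '' A = φi ⁻¹' A :=
      congrFun (Set.image_eq_preimage_of_inverse h1 h2) A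
    have hmA : MeasurableSet (φ '' A) := by
      rw [himg]; exact hφi.continuous.measurable hA
    have e1 : Measure.map φ (densityMeasure a) (φ '' A) = densityMeasure b (φ '' A) := by rw [h]
    rw [Measure.map_apply hφ.continuous.measurable hmA,
      Set.preimage_image_eq _ h1.injective] at e1
    unfold densityMeasure at e1
    rw [e1, withDensity_apply _ hmA, withDensity_apply _ hA,
      lintegral_image_eq_lintegral_abs_det_fderiv_mul volume hA
        (fun x _ => ((hφ.differentiable one_ne_zero) x).hasFDerivAt.hasFDerivWithinAt)
        h1.injective.injOn]
    refine lintegral_congr fun x => ?_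
    rw [ENNReal.ofReal_mul (abs_nonneg _)]
  rw [withDensity_eq_iff_of_sigmaFinite
    ha.measurable.ennreal_ofReal.aemeasurable hcd.measurable.ennreal_ofReal.aemeasurable] at key
  have k2 : a =ᵐ[volume] fun z => |(fderiv ℝ φ z).det| * b (φ z) := by
    filter_upwards [key] with x hx
    exact (ENNReal.ofReal_eq_ofReal_iff (ha0 x) (mul_nonneg (abs_nonneg _) (hb0 _))).1 hx
  exact congrFun ((Continuous.ae_eq_iff_eq volume ha hcd).1 k2) z

lemma aux_fderiv_dep {d : ℕ} {L : (Fin d → ℝ) → ℝ} {S : Finset (Fin d)}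
    (hL : Differentiable ℝ L) (hS : DependsOnlyOn L S) (z v : Fin d → ℝ)
    (hv : ∀ i ∈ S, v i = 0) : fderiv ℝ L z v = 0 := by
  have h1 : HasDerivAt (fun t : ℝ => L (z + t • v)) (fderiv ℝ L z v) 0 := by
    have h2 : HasDerivAt (fun t : ℝ => z + t • v) v 0 := by
      simpa using ((hasDerivAt_id (0:ℝ)).smul_const v).const_add z
    have h3 : HasFDerivAt L (fderiv ℝ L z) (z + (0:ℝ) • v) := by
      simpa using (hL z).hasFDerivAt
    exact h3.comp_hasDerivAt (0:ℝ) h2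
  have h4 : (fun t : ℝ => L (z + t • v)) = fun _ => L z := by
    funext t
    apply hS
    intro i hi
    simp [hv i hi]
  rw [h4] at h1
  exact h1.unique (hasDerivAt_const _ _)

lemma aux_step1 {d : ℕ} (φ φi : (Fin d → ℝ) → (Fin d → ℝ)) (hφ : ContDiff ℝ 1 φ)
    (hφi : ContDiff ℝ 1 φi) (h1 : Function.LeftInverse φi φ)
    (L R : (Fin d → ℝ) → ℝ) (S T : Finset (Fin d)) (m j : Fin d)
    (hL : Differentiable ℝ L) (hLS : DependsOnlyOn L S)
    (hR : Differentiable ℝ R) (hRT : DependsOnlyOn R T) (hj : j ∉ T)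
    (hLR : ∀ z, L (φ z) = R z)
    (hl : ∀ l ∈ S, l ≠ m → ∀ z, fderiv ℝ φ z (Pi.single j 1) l = 0)
    (hd : ∀ᵐ z : Fin d → ℝ, fderiv ℝ L z (Pi.single m 1) ≠ 0) (z : Fin d → ℝ) :
    fderiv ℝ φ z (Pi.single j 1) m = 0 := by
  have hφd : Differentiable ℝ φ := hφ.differentiable one_ne_zero
  have hae : ∀ᵐ z : Fin d → ℝ, fderiv ℝ L (φ z) (Pi.single m 1) ≠ 0 := by
    rw [ae_iff] at hd ⊢
    refine measure_mono_null ?_ (addHaar_image_eq_zero_of_differentiableOn_of_addHaar_eq_zero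
      volume ((hφi.differentiable one_ne_zero).differentiableOn) hd)
    intro x hx
    exact ⟨φ x, hx, h1 x⟩
  have hc : Continuous fun z => fderiv ℝ φ z (Pi.single j 1) m := by
    have h3 : Continuous (fderiv ℝ φ) := hφ.continuous_fderiv one_ne_zero
    exact (continuous_apply m).comp (h3.clm_apply continuous_const)
  have hz : (fun z => fderiv ℝ φ z (Pi.single j 1) m) =ᵐ[volume] fun _ => 0 := by
    filter_upwards [hae] with x hx
    have e1 : fderiv ℝ (fun z => L (φ z)) x = (fderiv ℝ L (φ x)).comp (fderiv ℝ φ x) :=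
      fderiv_comp x (hL _) (hφd x)
    have e2 : (fun z => L (φ z)) = R := funext hLR
    rw [e2] at e1
    have e3 : fderiv ℝ R x (Pi.single j 1) = 0 := by
      apply aux_fderiv_dep hR hRT
      intro i hi
      have : i ≠ j := fun h => hj (h ▸ hi)
      simp [this]
    rw [e1] at e3
    set v := fderiv ℝ φ x (Pi.single j 1) with hv
    have e4 : fderiv ℝ L (φ x) v = 0 := e3
    have e5 : fderiv ℝ L (φ x) (v - v m • Pi.single m (1:ℝ)) = 0 := by
      apply aux_fderiv_dep hL hLS
      intro i hi
      by_cases him : i = m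
      · subst him; simp
      · simp [him, hv, hl i hi him x]
    rw [map_sub, e4, map_smul, zero_sub, neg_eq_zero, smul_eq_mul] at e5
    exact (mul_eq_zero.1 e5).resolve_right hx
  exact congrFun ((Continuous.ae_eq_iff_eq volume hc continuous_const).1 hz) z

lemma aux_tri {d : ℕ} (φ : (Fin d → ℝ) → (Fin d → ℝ)) (hφ : Differentiable ℝ φ) (m k : Fin d)
    (h : ∀ j, k < j → ∀ z, fderiv ℝ φ z (Pi.single j 1) m = 0) (z w : Fin d → ℝ)
    (hzw : ∀ i ≤ k, z i = w i) : φ z m = φ w m := by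
  have hv : ∀ x, fderiv ℝ φ x (w - z) m = 0 := by
    intro x
    have e : w - z = ∑ j, (w - z) j • Pi.single j (1:ℝ) := by
      ext i
      simp [Finset.sum_apply, Pi.single_apply]
    rw [e, map_sum, Finset.sum_apply]
    refine Finset.sum_eq_zero fun j _ => ?_
    rw [map_smul, Pi.smul_apply]
    rcases le_or_gt j k with hj | hj
    · simp [hzw j hj]
    · simp [h j hj x]
  have hd : ∀ t : ℝ, HasDerivAt (fun t : ℝ => φ (z + t • (w - z)) m) 0 t := by
    intro t
    have h2 : HasDerivAt (fun t : ℝ => z + t • (w - z)) (w - z) t := by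
      simpa using ((hasDerivAt_id t).smul_const (w - z)).const_add z
    have h3 := (hφ (z + t • (w - z))).hasFDerivAt.comp_hasDerivAt t h2
    have h4 := (hasDerivAt_pi.1 h3) m
    rw [hv] at h4
    exact h4
  have := is_const_of_deriv_eq_zero (fun t => (hd t).differentiableAt) (fun t => (hd t).deriv) 0 1
  simpa using this

lemma aux_inj (h h' : ℝ → ℝ) (hd : ∀ t, HasDerivAt h (h' t) t) (h0 : ∀ t, h' t ≠ 0) :
    Function.Injective h := by
  have key : ∀ a b, a < b → h a ≠ h b := by
    intro a b hab heq
    obtain ⟨c, _, hc⟩ := exists_deriv_eq_zero hab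
      (fun x _ => (hd x).continuousAt.continuousWithinAt) heq
    exact h0 c ((hd c).deriv ▸ hc)
  intro a b hab
  rcases lt_trichotomy a b with hlt | heq | hgt
  · exact (key a b hlt hab).elim
  · exact heq
  · exact (key b a hgt hab.symm).elim

lemma aux_mono_pos (q p h h' : ℝ → ℝ) (hd : ∀ t, HasDerivAt h (h' t) t) (h0 : ∀ t, 0 < h' t)
    (hs : Function.Surjective h) (hpq : ∀ t, p t = q (h t) * |h' t|) (t : ℝ) :
    ∫ x in Set.Iio (h t), q x = ∫ x in Set.Iio t, p x := by
  have hm : StrictMono h := strictMono_of_deriv_pos fun x => by rw [(hd x).deriv]; exact h0 x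
  have himg : h '' Set.Iio t = Set.Iio (h t) := by
    ext y
    constructor
    · rintro ⟨x, hx, rfl⟩; exact hm hx
    · intro hy
      obtain ⟨x, rfl⟩ := hs y
      exact ⟨x, hm.lt_iff_lt.1 hy, rfl⟩
  rw [← himg, integral_image_eq_integral_abs_deriv_smul measurableSet_Iio
    (fun x _ => (hd x).hasDerivWithinAt) hm.injective.injOn]
  refine integral_congr_ae (Filter.Eventually.of_forall fun x => ?_)
  simp only [hpq, smul_eq_mul, mul_comm]

lemma aux_cdf_inj (q : ℝ → ℝ) (hq : ∀ x, 0 < q x) (hqi : Integrable q) (a b : ℝ)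
    (h : ∫ x in Set.Iio a, q x = ∫ x in Set.Iio b, q x) : a = b := by
  have key : ∀ a b : ℝ, a < b → ∫ x in Set.Iio a, q x ≠ ∫ x in Set.Iio b, q x := by
    intro a b hab heq
    have e : Set.Iio b = Set.Iio a ∪ Set.Ico a b := (Set.Iio_union_Ico_eq_Iio hab.le).symm
    rw [e, setIntegral_union (by
      rw [Set.disjoint_left]; intro x hx hx'; exact absurd hx'.1 (not_le.2 hx)) measurableSet_Ico
      hqi.integrableOn hqi.integrableOn] at heq
    have hpos : 0 < ∫ x in Set.Ico a b, q x := by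
      rw [setIntegral_pos_iff_support_of_nonneg_ae
        (Filter.Eventually.of_forall fun x => (hq x).le) hqi.integrableOn]
      have : Function.support q = Set.univ := by
        ext x; simp [(hq x).ne']
      rw [this, Set.univ_inter, Real.volume_Ico]
      simpa using hab
    linarith
  rcases lt_trichotomy a b with hlt | heq | hgt
  · exact (key a b hlt h).elim
  · exact heq
  · exact (key b a hgt h.symm).elim

lemma aux_unique_pos (q p h₁ h₁' h₂ h₂' : ℝ → ℝ) (hq : ∀ x, 0 < q x) (hqi : Integrable q)
    (hd₁ : ∀ t, HasDerivAt h₁ (h₁' t) t) (hd₂ : ∀ t, HasDerivAt h₂ (h₂' t) t)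
    (hs₁ : Function.Surjective h₁) (hs₂ : Function.Surjective h₂)
    (hp₁ : ∀ t, p t = q (h₁ t) * |h₁' t|) (hp₂ : ∀ t, p t = q (h₂ t) * |h₂' t|)
    (h0₁ : ∀ t, 0 < h₁' t) (h0₂ : ∀ t, 0 < h₂' t) (t : ℝ) : h₁ t = h₂ t := by
  apply aux_cdf_inj q hq hqi
  rw [aux_mono_pos q p h₁ h₁' hd₁ h0₁ hs₁ hp₁, aux_mono_pos q p h₂ h₂' hd₂ h0₂ hs₂ hp₂]

lemma aux_unique_neg (q p h₁ h₁' h₂ h₂' : ℝ → ℝ) (hq : ∀ x, 0 < q x) (hqi : Integrable q)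
    (hd₁ : ∀ t, HasDerivAt h₁ (h₁' t) t) (hd₂ : ∀ t, HasDerivAt h₂ (h₂' t) t)
    (hs₁ : Function.Surjective h₁) (hs₂ : Function.Surjective h₂)
    (hp₁ : ∀ t, p t = q (h₁ t) * |h₁' t|) (hp₂ : ∀ t, p t = q (h₂ t) * |h₂' t|)
    (h0₁ : ∀ t, h₁' t < 0) (h0₂ : ∀ t, h₂' t < 0) (t : ℝ) : h₁ t = h₂ t := by
  have := aux_unique_pos (fun x => q (-x)) p (fun t => -h₁ t) (fun t => -h₁' t)
    (fun t => -h₂ t) (fun t => -h₂' t) (fun x => hq _) hqi.comp_neg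
    (fun t => (hd₁ t).neg) (fun t => (hd₂ t).neg)
    (fun y => (hs₁ (-y)).imp fun x hx => by simp [hx])
    (fun y => (hs₂ (-y)).imp fun x hx => by simp [hx])
    (fun t => by simpa using hp₁ t) (fun t => by simpa using hp₂ t)
    (fun t => by simpa using h0₁ t) (fun t => by simpa using h0₂ t) t
  simpa using this

/-- Surjectivity of the partial maps of a triangular bijection. -/
lemma aux_surj {d : ℕ} (ψ : (Fin d → ℝ) → (Fin d → ℝ)) (D : Fin d → (Fin d → ℝ) → ℝ)
    (hsurj : Function.Surjective ψ)
    (htri : ∀ k z w, (∀ i ≤ k, z i = w i) → ψ z k = ψ w k)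
    (hD : ∀ i z t, HasDerivAt (fun t => ψ (Function.update z i t) i)
      (D i (Function.update z i t)) t)
    (hD0 : ∀ i z, D i z ≠ 0) (m : Fin d) (z : Fin d → ℝ) :
    Function.Surjective fun t => ψ (Function.update z m t) m := by
  intro s
  obtain ⟨w, hw⟩ := hsurj (Function.update (ψ z) m s)
  have hlt : ∀ n : ℕ, ∀ i : Fin d, i.val = n → i < m → w i = z i := by
    intro n
    induction n using Nat.strong_induction_on with
    | _ n ih =>
      intro i hin him
      have e1 : ψ w i = ψ z i := by rw [hw, Function.update_of_ne him.ne]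
      have e2 : ψ w i = ψ (Function.update z i (w i)) i := by
        apply htri
        intro l hl
        rcases hl.lt_or_eq with hl | hl
        · rw [Function.update_of_ne hl.ne]
          exact ih l.val (hin ▸ hl) l rfl (hl.trans him)
        · subst hl; simp
      have e3 : ψ z i = ψ (Function.update z i (z i)) i := by simp
      have := aux_inj _ _ (hD i z) (fun t => hD0 i _)
      apply this
      show ψ (Function.update z i (w i)) i = ψ (Function.update z i (z i)) i
      rw [← e2, ← e3, e1]
  refine ⟨w m, ?_⟩
  show ψ (Function.update z m (w m)) m = s
  have : ψ (Function.update z m (w m)) m = ψ w m := by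
    apply htri
    intro l hl
    rcases hl.lt_or_eq with hl | hl
    · rw [Function.update_of_ne hl.ne]; exact (hlt _ l rfl hl).symm
    · subst hl; simp
  rw [this, hw]; simp

lemma aux_core {d : ℕ} (pa : Fin d → Finset (Fin d)) (hpa : ∀ i : Fin d, ∀ j ∈ pa i, j < i)
    (P Q : Fin d → (Fin d → ℝ) → ℝ) (hP : IsCondFamily pa P) (hQ : IsCondFamily pa Q)
    (ψ : (Fin d → ℝ) → (Fin d → ℝ)) (D : Fin d → (Fin d → ℝ) → ℝ)
    (hsurj : Function.Surjective ψ)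
    (htri : ∀ k z w, (∀ i ≤ k, z i = w i) → ψ z k = ψ w k)
    (hD : ∀ i z t, HasDerivAt (fun t => ψ (Function.update z i t) i)
      (D i (Function.update z i t)) t)
    (hD0 : ∀ i z, D i z ≠ 0)
    (hdens : ∀ z, ∏ i, P i z = ∏ i, (Q i (ψ z) * |D i z|)) (k : Fin d) (z : Fin d → ℝ) :
    P k z = Q k (ψ z) * |D k z| := by
  have hPl : ∀ i z w, (∀ l ≤ i, z l = w l) → P i z = P i w := by
    intro i z w h
    apply (hP i).2.2.1
    intro l hl
    rcases Finset.mem_insert.1 hl with rfl | hl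
    · exact h _ le_rfl
    · exact h _ (hpa i l hl).le
  have hQl : ∀ i z w, (∀ l ≤ i, z l = w l) → Q i z = Q i w := by
    intro i z w h
    apply (hQ i).2.2.1
    intro l hl
    rcases Finset.mem_insert.1 hl with rfl | hl
    · exact h _ le_rfl
    · exact h _ (hpa i l hl).le
  have hDl : ∀ i z w, (∀ l ≤ i, z l = w l) → D i z = D i w := by
    intro i z w h
    have h1 := hD i z (z i)
    have h2 := hD i w (z i)
    have e : (fun t => ψ (Function.update z i t) i) = fun t => ψ (Function.update w i t) i := by
      funext t
      apply htri
      intro l hl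
      by_cases hli : l = i
      · subst hli; simp
      · simp [hli, h l hl]
    rw [e] at h1
    have h3 := h1.unique h2
    rw [Function.update_eq_self, h i le_rfl, Function.update_eq_self] at h3
    exact h3
  set F : Fin d → (Fin d → ℝ) → ℝ := fun i z => Q i (ψ z) * |D i z| with hF
  have hFl : ∀ i z w, (∀ l ≤ i, z l = w l) → F i z = F i w := by
    intro i z w h
    simp only [hF]
    rw [hDl i z w h, hQl i (ψ z) (ψ w) fun l hl => htri l z w fun j hj => h j (hj.trans hl)]
  have hFint : ∀ i z, ∫ t, F i (Function.update z i t) = 1 := by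
    intro i z
    have hs := aux_surj ψ D hsurj htri hD hD0 i z
    have hi := aux_inj _ _ (hD i z) (fun t => hD0 i _)
    have := integral_image_eq_integral_abs_deriv_smul MeasurableSet.univ
      (fun x _ => (hD i z x).hasDerivWithinAt) hi.injOn (fun s => Q i (Function.update (ψ z) i s))
    rw [Set.image_univ, hs.range_eq, Measure.restrict_univ, (hQ i).2.2.2] at this
    rw [this]
    refine integral_congr_ae (Filter.Eventually.of_forall fun t => ?_)
    simp only [hF, smul_eq_mul]
    rw [mul_comm]
    congr 1
    apply hQl
    intro l hl
    rcases hl.lt_or_eq with hl | hl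
    · rw [Function.update_of_ne hl.ne]
      apply htri
      intro j hj
      rw [Function.update_of_ne (hj.trans_lt hl).ne]
    · subst hl; simp
  have hPpos : ∀ i z, 0 < P i z := fun i => (hP i).1
  have main : ∀ n : ℕ, ∀ m : ℕ, m + n = d → ∀ z,
      ∏ i ∈ Finset.univ.filter (fun i : Fin d => i.val < m), P i z =
      ∏ i ∈ Finset.univ.filter (fun i : Fin d => i.val < m), F i z := by
    intro n
    induction n with
    | zero =>
      intro m hm z
      have : Finset.univ.filter (fun i : Fin d => i.val < m) = Finset.univ := by
        ext i; simp; omega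
      rw [this]; exact hdens z
    | succ n ih =>
      intro m hm z
      let c : Fin d := ⟨m, by omega⟩
      have hsplit : Finset.univ.filter (fun i : Fin d => i.val < m + 1) =
          insert c (Finset.univ.filter (fun i : Fin d => i.val < m)) := by
        ext i; simp [c, Fin.ext_iff]; omega
      have hc : c ∉ Finset.univ.filter (fun i : Fin d => i.val < m) := by simp [c]
      have h1 : ∀ (G : Fin d → (Fin d → ℝ) → ℝ),
          (∀ i z w, (∀ l ≤ i, z l = w l) → G i z = G i w) →
          (∀ i z, ∫ t, G i (Function.update z i t) = 1) →
          ∫ t, ∏ i ∈ Finset.univ.filter (fun i : Fin d => i.val < m + 1),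
            G i (Function.update z c t) =
          ∏ i ∈ Finset.univ.filter (fun i : Fin d => i.val < m), G i z := by
        intro G hG hGi
        have : ∀ t, ∏ i ∈ Finset.univ.filter (fun i : Fin d => i.val < m + 1),
            G i (Function.update z c t) = G c (Function.update z c t) *
            ∏ i ∈ Finset.univ.filter (fun i : Fin d => i.val < m), G i z := by
          intro t
          rw [hsplit, Finset.prod_insert hc]
          congr 1
          refine Finset.prod_congr rfl fun i hi => hG _ _ _ fun l hl => ?_
          have : l ≠ c := by
            rintro rfl
            simp at hi
            exact absurd hi (not_lt.2 hl)
          rw [Function.update_of_ne this]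
        simp_rw [this]
        rw [integral_mul_const, hGi, one_mul]
      rw [← h1 P hPl (fun i => (hP i).2.2.2), ← h1 F hFl hFint]
      refine integral_congr_ae (Filter.Eventually.of_forall fun t => ?_)
      exact ih (m + 1) (by omega) _
  have hsplit : Finset.univ.filter (fun i : Fin d => i.val < k.val + 1) =
      insert k (Finset.univ.filter (fun i : Fin d => i.val < k.val)) := by
    ext i; simp [Fin.ext_iff]; omega
  have hk : k ∉ Finset.univ.filter (fun i : Fin d => i.val < k.val) := by simp
  have a1 := main (d - (k.val + 1)) (k.val + 1) (by omega) z
  have a2 := main (d - k.val) k.val (by omega) z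
  rw [hsplit, Finset.prod_insert hk, Finset.prod_insert hk, ← a2] at a1
  exact mul_right_cancel₀ (Finset.prod_pos fun i _ => hPpos i z).ne' a1

lemma aux_update_family {d : ℕ} (pa : Fin d → Finset (Fin d)) (p : Fin d → (Fin d → ℝ) → ℝ)
    (hp : IsCondFamily pa p) (k : Fin d) (r : ℝ → ℝ) (hr : IsC1Density r) :
    IsCondFamily pa (Function.update p k fun z => r (z k)) := by
  intro i
  by_cases hik : i = k
  · subst hik
    rw [Function.update_self]
    refine ⟨fun z => hr.1 _, hr.2.1.comp (contDiff_apply ℝ ℝ i), ?_, ?_⟩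
    · intro z w h
      show r (z i) = r (w i)
      rw [h i (Finset.mem_insert_self _ _)]
    · intro z
      simpa using hr.2.2
  · rw [Function.update_of_ne hik]
    exact hp i

lemma aux_update_prod {d : ℕ} (p : Fin d → (Fin d → ℝ) → ℝ) (k : Fin d)
    (r : (Fin d → ℝ) → ℝ) (z : Fin d → ℝ) :
    ∏ i, Function.update p k r i z = r z * ∏ i ∈ ({k} : Finset (Fin d))ᶜ, p i z := by
  rw [Fintype.prod_eq_mul_prod_compl k, Function.update_self]
  congr 1
  refine Finset.prod_congr rfl fun i hi => ?_
  rw [Function.update_of_ne (by simpa using hi)]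

lemma aux_perm_family {d : ℕ} (pa : Fin d → Finset (Fin d)) (σ : Equiv.Perm (Fin d))
    (hσ : ∀ i j : Fin d, j ∈ pa i ↔ σ j ∈ pa (σ i)) (q : Fin d → (Fin d → ℝ) → ℝ)
    (hq : IsCondFamily pa q) : IsCondFamily pa fun i w => q (σ i) fun l => w (σ.symm l) := by
  intro i
  refine ⟨fun z => (hq _).1 _, (hq (σ i)).2.1.comp
    (contDiff_pi.2 fun l => contDiff_apply ℝ ℝ (σ.symm l)), ?_, ?_⟩
  · intro z w h
    apply (hq (σ i)).2.2.1
    intro l hl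
    apply h
    rcases Finset.mem_insert.1 hl with rfl | hl
    · simp
    · refine Finset.mem_insert_of_mem ((hσ _ _).2 ?_)
      simpa using hl
  · intro z
    rw [← (hq (σ i)).2.2.2 fun l => z (σ.symm l)]
    refine integral_congr_ae (Filter.Eventually.of_forall fun t => ?_)
    show q (σ i) _ = q (σ i) _
    congr 1
    funext l
    simp only [Function.update_apply, Equiv.symm_apply_eq]

lemma aux_det {d : ℕ} (σ : Equiv.Perm (Fin d)) (A : (Fin d → ℝ) →L[ℝ] (Fin d → ℝ))
    (h : ∀ k j, k < j → A (Pi.single j 1) (σ k) = 0) :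
    |A.det| = ∏ k, |A (Pi.single k 1) (σ k)| := by
  have h1 : A.det = (LinearMap.toMatrix' (A : (Fin d → ℝ) →ₗ[ℝ] (Fin d → ℝ))).det := by
    rw [LinearMap.det_toMatrix']
  have h2 := Matrix.det_permute σ (LinearMap.toMatrix' (A : (Fin d → ℝ) →ₗ[ℝ] (Fin d → ℝ)))
  rw [Matrix.det_of_isLowerTriangular] at h2
  · rw [h1, ← Finset.abs_prod]
    have h3 : ∏ k, A (Pi.single k 1) (σ k) = _ := h2
    rw [h3, abs_mul]
    rcases Int.units_eq_one_or (Equiv.Perm.sign σ) with h | h <;> simp [h]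
  · intro i j hij
    exact h i j hij

/-- **Theorem (known targets up to graph automorphisms, part (ii)).** Two models over the
same DAG, where `σ` is a graph automorphism; for each node `k` the first model carries a
perfect stochastic intervention `pt k` on node `k` and the second model a perfect
intervention `qt k` on node `σ k`. Under the general interventional discrepancy in both
models and matching pushforwards in all regimes, `φ := f′⁻¹ ∘ f = P_σ ∘ h` with
`h ∈ S_scaling`: there are C¹ diffeomorphisms `hs i` of `ℝ` with
`φ(z) (σ i) = hs i (z i)` for all `z` and `i`. -/
theorem cauca_automorphism_scaling_identifiability {d : ℕ}
    (pa : Fin d → Finset (Fin d))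
    (hpa : ∀ i : Fin d, ∀ j ∈ pa i, j < i)
    (σ : Equiv.Perm (Fin d))
    (hσ : ∀ i j : Fin d, j ∈ pa i ↔ σ j ∈ pa (σ i))
    (p q : Fin d → (Fin d → ℝ) → ℝ)
    (hp : IsCondFamily pa p) (hq : IsCondFamily pa q)
    (pt qt : Fin d → ℝ → ℝ)
    (hpt : ∀ k, IsC1Density (pt k)) (hqt : ∀ k, IsC1Density (qt k))
    (hdiscp : ∀ k i : Fin d, ∀ᵐ (z : Fin d → ℝ) ∂volume,
        fderiv ℝ (fun w => Real.log (p i w)) z (Pi.single i 1) ≠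
          deriv (fun t => Real.log (pt k t)) (z k))
    (hdiscq : ∀ k i : Fin d, ∀ᵐ (z : Fin d → ℝ) ∂volume,
        fderiv ℝ (fun w => Real.log (q i w)) z (Pi.single i 1) ≠
          deriv (fun t => Real.log (qt k t)) (z (σ k)))
    (f f' g' : (Fin d → ℝ) → (Fin d → ℝ))
    (hf : IsC1Diffeo f) (hf' : ContDiff ℝ 1 f') (hg' : ContDiff ℝ 1 g')
    (hinv₁ : Function.LeftInverse g' f') (hinv₂ : Function.RightInverse g' f')
    (hmatch0 : Measure.map f (densityMeasure (jointDensity p)) =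
        Measure.map f' (densityMeasure (jointDensity q)))
    (hmatch : ∀ k : Fin d,
        Measure.map f (densityMeasure fun z =>
            pt k (z k) * ∏ i ∈ ({k} : Finset (Fin d))ᶜ, p i z) =
        Measure.map f' (densityMeasure fun z =>
            qt k (z (σ k)) * ∏ i ∈ ({σ k} : Finset (Fin d))ᶜ, q i z)) :
    ∃ hs : Fin d → ℝ → ℝ, (∀ i, IsC1Diffeo (hs i)) ∧
      ∀ (z : Fin d → ℝ) (i : Fin d), g' (f z) (σ i) = hs i (z i) := by
  obtain ⟨hfC, fi, hfi, hl, hr⟩ := hf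
  set φ : (Fin d → ℝ) → (Fin d → ℝ) := fun z => g' (f z) with hφdef
  set φi : (Fin d → ℝ) → (Fin d → ℝ) := fun z => fi (f' z) with hφidef
  have hφ : ContDiff ℝ 1 φ := hg'.comp hfC
  have hφi : ContDiff ℝ 1 φi := hfi.comp hf'
  have hφd : Differentiable ℝ φ := hφ.differentiable one_ne_zero
  have h1 : Function.LeftInverse φi φ := fun z => by
    show fi (f' (g' (f z))) = z
    rw [hinv₂, hl]
  have h2 : Function.RightInverse φi φ := fun z => by
    show g' (f (fi (f' z))) = z
    rw [hr, hinv₁]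
  have htrans : ∀ P Q : Fin d → (Fin d → ℝ) → ℝ, IsCondFamily pa P → IsCondFamily pa Q →
      Measure.map f (densityMeasure fun z => ∏ i, P i z) =
        Measure.map f' (densityMeasure fun z => ∏ i, Q i z) →
      ∀ z, ∏ i, P i z = |(fderiv ℝ φ z).det| * ∏ i, Q i (φ z) := by
    intro P Q hP hQ h z
    refine aux_transport φ φi hφ hφi h1 h2 (fun z => ∏ i, P i z) (fun z => ∏ i, Q i z)
      (continuous_finsetProd _ fun i _ => (hP i).2.1.continuous)
      (continuous_finsetProd _ fun i _ => (hQ i).2.1.continuous)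
      (fun z => Finset.prod_nonneg fun i _ => ((hP i).1 z).le)
      (fun z => Finset.prod_nonneg fun i _ => ((hQ i).1 z).le) ?_ z
    have e := congrArg (Measure.map g') h
    rw [Measure.map_map hg'.continuous.measurable hfC.continuous.measurable,
      Measure.map_map hg'.continuous.measurable hf'.continuous.measurable,
      hinv₁.comp_eq_id, Measure.map_id] at e
    exact e
  have hpk : ∀ k, IsCondFamily pa (Function.update p k fun z => pt k (z k)) := fun k =>
    aux_update_family pa p hp k _ (hpt k)
  have hqk : ∀ k, IsCondFamily pa (Function.update q (σ k) fun z => qt k (z (σ k))) := fun k =>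
    aux_update_family pa q hq (σ k) _ (hqt k)
  have hd0 := htrans p q hp hq hmatch0
  have hdk : ∀ k z, _ := fun k => htrans _ _ (hpk k) (hqk k) (by
    simp_rw [aux_update_prod]; exact hmatch k)
  have hppos : ∀ i z, 0 < p i z := fun i => (hp i).1
  have hqpos : ∀ i z, 0 < q i z := fun i => (hq i).1
  have hdet : ∀ z, 0 < |(fderiv ℝ φ z).det| := by
    intro z
    have := hd0 z
    refine lt_of_le_of_ne (abs_nonneg _) fun h => ?_
    rw [← h, zero_mul] at this
    exact (Finset.prod_pos fun i _ => hppos i z).ne' this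
  have hratio : ∀ k z, pt k (z k) * q (σ k) (φ z) = qt k (φ z (σ k)) * p k z := by
    intro k z
    have a0 := hd0 z
    have ak := hdk k z
    rw [aux_update_prod, aux_update_prod] at ak
    rw [Fintype.prod_eq_mul_prod_compl k, Fintype.prod_eq_mul_prod_compl (σ k)] at a0
    have c1 : (0:ℝ) < ∏ i ∈ ({k} : Finset (Fin d))ᶜ, p i z :=
      Finset.prod_pos fun i _ => hppos i z
    have c2 : (0:ℝ) < ∏ i ∈ ({σ k} : Finset (Fin d))ᶜ, q i (φ z) :=
      Finset.prod_pos fun i _ => hqpos i _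
    have c3 := hdet z
    generalize (∏ i ∈ ({k} : Finset (Fin d))ᶜ, p i z) = A at *
    generalize (∏ i ∈ ({σ k} : Finset (Fin d))ᶜ, q i (φ z)) = B at *
    generalize |(fderiv ℝ φ z).det| = C at *
    have : (A * (B * C)) * (pt k (z k) * q (σ k) (φ z)) =
        (A * (B * C)) * (qt k (φ z (σ k)) * p k z) := by
      linear_combination (B * C * q (σ k) (φ z)) * ak - (B * C * qt k (φ z (σ k))) * a0
    exact mul_left_cancel₀ (by positivity) this
  have hlogr : ∀ r : ℝ → ℝ, IsC1Density r → Differentiable ℝ fun t => Real.log (r t) :=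
    fun r hr t => ((hr.2.1.differentiable one_ne_zero) t).log (hr.1 t).ne'
  have hlogp : ∀ (P : Fin d → (Fin d → ℝ) → ℝ), IsCondFamily pa P → ∀ i,
      Differentiable ℝ fun z => Real.log (P i z) :=
    fun P hP i z => (((hP i).2.1.differentiable one_ne_zero) z).log ((hP i).1 z).ne'
  have hev : ∀ k : Fin d, Differentiable ℝ fun z : Fin d → ℝ => z k := fun k =>
    differentiable_apply k
  have htri0 : ∀ n : ℕ, ∀ k : Fin d, k.val = n → ∀ j, k < j → ∀ z,
      fderiv ℝ φ z (Pi.single j 1) (σ k) = 0 := by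
    intro n
    induction n using Nat.strong_induction_on with
    | _ n ih =>
      intro k hk j hkj z
      refine aux_step1 φ φi hφ hφi h1
        (fun w => Real.log (qt k (w (σ k))) - Real.log (q (σ k) w))
        (fun w => Real.log (pt k (w k)) - Real.log (p k w))
        (insert (σ k) (pa (σ k))) (insert k (pa k)) (σ k) j
        (((hlogr _ (hqt k)).comp (hev (σ k))).sub (hlogp q hq _)) ?_
        (((hlogr _ (hpt k)).comp (hev k)).sub (hlogp p hp _)) ?_ ?_ ?_ ?_ ?_ z
      · intro z w h
        simp only
        rw [h _ (Finset.mem_insert_self _ _), (hq (σ k)).2.2.1 z w h]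
      · intro z w h
        simp only
        rw [h _ (Finset.mem_insert_self _ _), (hp k).2.2.1 z w h]
      · intro hj
        rcases Finset.mem_insert.1 hj with h | h
        · exact hkj.ne' h
        · exact absurd (hpa k j h) (not_lt.2 hkj.le)
      · intro z
        have e := congrArg Real.log (hratio k z)
        rw [Real.log_mul ((hpt k).1 _).ne' (hqpos _ _).ne',
          Real.log_mul ((hqt k).1 _).ne' (hppos _ _).ne'] at e
        show Real.log (qt k (φ z (σ k))) - Real.log (q (σ k) (φ z)) = _
        linarith
      · intro l hl hlk z
        have hl' : l ∈ pa (σ k) := (Finset.mem_insert.1 hl).resolve_left hlk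
        obtain ⟨l', rfl⟩ := σ.surjective l
        have hlt := hpa k l' ((hσ k l').2 hl')
        exact ih l'.val (hk ▸ hlt) l' rfl j (hlt.trans hkj) z
      · filter_upwards [hdiscq k (σ k)] with w hw
        have e1 : HasFDerivAt (fun w : Fin d → ℝ => Real.log (qt k (w (σ k))))
            (deriv (fun t => Real.log (qt k t)) (w (σ k)) •
              (ContinuousLinearMap.proj (R := ℝ) (φ := fun _ : Fin d => ℝ) (σ k))) w :=
          HasDerivAt.comp_hasFDerivAt (h₂ := fun t => Real.log (qt k t))
            (f := fun w : Fin d → ℝ => w (σ k)) w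
            ((hlogr _ (hqt k)) (w (σ k))).hasDerivAt
            (hasFDerivAt_apply (𝕜 := ℝ) (F' := fun _ : Fin d => ℝ) (σ k) w)
        have e2 := (e1.fun_sub ((hlogp q hq (σ k)) w).hasFDerivAt).fderiv
        rw [e2]
        simp only [ContinuousLinearMap.sub_apply, ContinuousLinearMap.smul_apply,
          ContinuousLinearMap.proj_apply, Pi.single_eq_same, smul_eq_mul, mul_one]
        exact sub_ne_zero.2 hw.symm
  have htri' : ∀ k j, k < j → ∀ z, fderiv ℝ φ z (Pi.single j 1) (σ k) = 0 :=
    fun k j hkj z => htri0 k.val k rfl j hkj z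
  set ψ : (Fin d → ℝ) → (Fin d → ℝ) := fun z i => φ z (σ i) with hψ
  set D : Fin d → (Fin d → ℝ) → ℝ := fun i z => fderiv ℝ φ z (Pi.single i 1) (σ i) with hDdef
  have htri : ∀ k z w, (∀ i ≤ k, z i = w i) → ψ z k = ψ w k := fun k z w h =>
    aux_tri φ hφd (σ k) k (htri' k) z w h
  have hsurj : Function.Surjective ψ := by
    intro w
    refine ⟨φi fun l => w (σ.symm l), ?_⟩
    funext i
    show φ (φi _) (σ i) = w i
    rw [h2]; simp
  have hdetD : ∀ z, |(fderiv ℝ φ z).det| = ∏ i, |D i z| := fun z =>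
    aux_det σ _ fun k j hkj => htri' k j hkj z
  have hD0 : ∀ i z, D i z ≠ 0 := by
    intro i z h
    have := hdet z
    rw [hdetD, Finset.prod_eq_zero (Finset.mem_univ i) (by rw [h, abs_zero])] at this
    exact lt_irrefl _ this
  have hD : ∀ i z t, HasDerivAt (fun t => ψ (Function.update z i t) i)
      (D i (Function.update z i t)) t := by
    intro i z t
    have := (hφd (Function.update z i t)).hasFDerivAt.comp_hasDerivAt t (hasDerivAt_update z i t)
    exact (hasDerivAt_pi.1 this) (σ i)
  have hDc : ∀ i, Continuous (D i) := by
    intro i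
    have h3 : Continuous (fderiv ℝ φ) := hφ.continuous_fderiv one_ne_zero
    exact (continuous_apply (σ i)).comp (h3.clm_apply continuous_const)
  have hcore : ∀ k z, pt k (z k) = qt k (ψ z k) * |D k z| := by
    intro k z
    have := aux_core pa hpa _ _ (hpk k) (aux_perm_family pa σ hσ _ (hqk k)) ψ D hsurj htri hD hD0
      (by
        intro z
        have hsy : (fun l => ψ z (σ.symm l)) = φ z := by
          funext l; simp [hψ]
        rw [hdk k z, Finset.prod_mul_distrib, hdetD, mul_comm, hsy]
        congr 1
        exact (Equiv.prod_comp σ (fun i =>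
          Function.update q (σ k) (fun z => qt k (z (σ k))) i (φ z))).symm) k z
    simpa using this
  have hqi : ∀ k, Integrable (qt k) := by
    intro k
    by_contra h
    have := (hqt k).2.2
    rw [integral_undef h] at this
    exact zero_ne_one this
  have hS := aux_surj ψ D hsurj htri hD hD0
  have hsep : ∀ k z, ψ z k = ψ (Function.update 0 k (z k)) k := by
    intro k z
    have hp₁ : ∀ w t, pt k t = qt k (ψ (Function.update w k t) k) *
        |D k (Function.update w k t)| := by
      intro w t
      have := hcore k (Function.update w k t)
      rwa [Function.update_self] at this
    have hsign : (∀ w, 0 < D k w) ∨ ∀ w, D k w < 0 := by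
      by_contra! hcon
      obtain ⟨⟨a, ha⟩, ⟨b, hb⟩⟩ := hcon
      obtain ⟨c, hc⟩ := mem_range_of_exists_le_of_exists_ge (hDc k) ⟨a, ha⟩ ⟨b, hb⟩
      exact hD0 k c hc
    have : ψ (Function.update z k (z k)) k = ψ (Function.update 0 k (z k)) k := by
      rcases hsign with hs | hs
      · exact aux_unique_pos (qt k) (pt k) _ _ _ _ (hqt k).1 (hqi k) (hD k z) (hD k 0)
          (hS k z) (hS k 0) (hp₁ z) (hp₁ 0) (fun t => hs _) (fun t => hs _) (z k)
      · exact aux_unique_neg (qt k) (pt k) _ _ _ _ (hqt k).1 (hqi k) (hD k z) (hD k 0)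
          (hS k z) (hS k 0) (hp₁ z) (hp₁ 0) (fun t => hs _) (fun t => hs _) (z k)
    rwa [Function.update_eq_self] at this
  have hupd : ∀ k : Fin d, ContDiff ℝ 1 fun t : ℝ => Function.update (0 : Fin d → ℝ) k t :=
    fun k => contDiff_update (𝕜 := ℝ) (F' := fun _ : Fin d => ℝ) 1 0 k
  refine ⟨fun k t => ψ (Function.update 0 k t) k, fun k => ?_, fun z k => hsep k z⟩
  refine ⟨(contDiff_pi.1 hφ (σ k)).comp (hupd k),
    fun s => φi (Function.update 0 (σ k) s) k,
    (contDiff_pi.1 hφi k).comp (hupd (σ k)), ?_, ?_⟩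
  · intro t
    apply aux_inj _ _ (hD k 0) (fun t => hD0 k _)
    simp only
    rw [← hsep k]
    show φ (φi _) (σ k) = _
    rw [h2, Function.update_self]
  · intro s
    show ψ (Function.update 0 k (φi (Function.update 0 (σ k) s) k)) k = s
    rw [← hsep k]
    show φ (φi _) (σ k) = _
    rw [h2, Function.update_self]
end
end

section
/- Let d ≥ 1 and consider the nonlinear ICA setting with matched intervention targets. Let the first model be given by strictly positive C¹ densities (p_i)_{i∈[d]} on ℝ and intervened densities (p̃_k)_{k∈[d−1]} with interventional joints p^k(z) = p̃_k(z_k)∏_{i≠k}p_i(z_i), and let the second model be given by (q_i)_{i∈[d]} and, for some permutation σ of [d], intervened densities (q̃_{σ(k)})_{k∈[d−1]} with joints q^k(z) = q̃_{σ(k)}(z_{σ(k)})∏_{i≠σ(k)}q_i(z_i). Assume the general interventional discrepancy: for every k ∈ [d−1] and every i ∈ [d], (log p_i)′(z_i) ≠ (log p̃_k)′(z_k) for Lebesgue-a.e. z ∈ ℝ^d, and likewise (log q_i)′(z_i) ≠ (log q̃_{σ(k)})′(z_{σ(k)}) a.e. If f, f′ : ℝ^d → ℝ^d are C¹ diffeomorphisms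 with f_*P^k = f′_*Q^k for all k ∈ {0,…,d−1}, then f′⁻¹∘f ∈ S_reparam. -/
open MeasureTheory

noncomputable section

/-- Probability measure of a strictly positive density. -/
lemma dens_prob {r : ℝ → ℝ} (hr : IsC1Density r) : IsProbabilityMeasure (densityMeasure₁ r) := by
  obtain ⟨h0, hc, h1⟩ := hr
  have hi : Integrable r := by
    by_contra h
    rw [integral_undef h] at h1
    norm_num at h1
  constructor
  rw [densityMeasure₁, withDensity_apply _ MeasurableSet.univ, Measure.restrict_univ,
    ← ofReal_integral_eq_lintegral_ofReal hi (Filter.Eventually.of_forall fun x => (h0 x).le), h1]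
  simp

lemma dens_openpos {r : ℝ → ℝ} (hr : IsC1Density r) :
    (densityMeasure₁ r).IsOpenPosMeasure := by
  obtain ⟨h0, hc, h1⟩ := hr
  have : (volume : Measure ℝ) ≪ densityMeasure₁ r := by
    refine withDensity_absolutelyContinuous' ?_ ?_
    · exact (hc.continuous.measurable.ennreal_ofReal).aemeasurable
    · exact Filter.Eventually.of_forall fun x => by simpa using h0 x
  exact this.isOpenPosMeasure

lemma dens_pi {d : ℕ} {p : Fin d → ℝ → ℝ} (hp : ∀ i, IsC1Density (p i)) :
    densityMeasure (fun z => ∏ i, p i (z i)) = Measure.pi fun i => densityMeasure₁ (p i) := by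
  have hint : ∀ i, Integrable (p i) := by
    intro i
    obtain ⟨h0, hc, h1⟩ := hp i
    by_contra h
    rw [integral_undef h] at h1
    norm_num at h1
  have := fun i => dens_prob (hp i)
  symm
  refine Measure.pi_eq fun s hs => ?_
  rw [densityMeasure, withDensity_apply _ (MeasurableSet.univ_pi hs), volume_pi,
    Measure.restrict_pi_pi]
  rw [← ofReal_integral_eq_lintegral_ofReal]
  · rw [integral_fintype_prod_eq_prod, ENNReal.ofReal_prod_of_nonneg]
    · refine Finset.prod_congr rfl fun i _ => ?_
      rw [densityMeasure₁, withDensity_apply _ (hs i), ofReal_integral_eq_lintegral_ofReal]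
      · exact (hint i).restrict
      · exact Filter.Eventually.of_forall fun x => ((hp i).1 x).le
    · intro i _
      exact integral_nonneg fun x => ((hp i).1 x).le
  · exact Integrable.fintype_prod_dep (fun i => (hint i).restrict)
  · exact Filter.Eventually.of_forall fun x => Finset.prod_nonneg fun i _ => ((hp i).1 _).le

/-- Matching of two pushforwards gives matching of density ratios. -/
lemma ratio_match {d : ℕ} {ρ ρ' r r' : (Fin d → ℝ) → ℝ}
    (hρ : Continuous ρ) (hρ' : Continuous ρ') (hr : Continuous r) (hr' : Continuous r')
    (hρ0 : ∀ z, 0 < ρ z) (hρ0' : ∀ z, 0 < ρ' z) (hr0 : ∀ z, 0 < r z) (hr0' : ∀ z, 0 < r' z)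
    {φ ψ : (Fin d → ℝ) → (Fin d → ℝ)} (hφ : Continuous φ) (hψ : Continuous ψ)
    (h1 : ∀ z, ψ (φ z) = z)
    (hm : Measure.map φ (densityMeasure ρ) = densityMeasure r)
    (hm' : Measure.map φ (densityMeasure ρ') = densityMeasure r') (w : Fin d → ℝ) :
    ρ' (ψ w) / ρ (ψ w) = r' w / r w := by
  have hcR : Continuous fun w => ρ' (ψ w) / ρ (ψ w) :=
    (hρ'.comp hψ).div (hρ.comp hψ) fun w => (hρ0 _).ne'
  have key : densityMeasure r' =
      volume.withDensity fun w => ENNReal.ofReal (r w * (ρ' (ψ w) / ρ (ψ w))) := by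
    ext s hs
    rw [← hm', Measure.map_apply hφ.measurable hs]
    have e1 : (volume.withDensity fun w => ENNReal.ofReal (r w * (ρ' (ψ w) / ρ (ψ w)))) s
        = ∫⁻ w in s, ENNReal.ofReal (ρ' (ψ w) / ρ (ψ w)) ∂(densityMeasure r) := by
      rw [densityMeasure, setLIntegral_withDensity_eq_setLIntegral_mul _
        hr.measurable.ennreal_ofReal hcR.measurable.ennreal_ofReal hs, withDensity_apply _ hs]
      refine lintegral_congr fun w => ?_
      simp only [Pi.mul_apply]
      rw [ENNReal.ofReal_mul (hr0 w).le]
    rw [e1, ← hm, setLIntegral_map hs hcR.measurable.ennreal_ofReal hφ.measurable]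
    simp only [h1]
    have hcR' : Continuous fun w => ρ' w / ρ w := hρ'.div hρ fun w => (hρ0 _).ne'
    rw [densityMeasure, densityMeasure, setLIntegral_withDensity_eq_setLIntegral_mul _
        hρ.measurable.ennreal_ofReal hcR'.measurable.ennreal_ofReal (hφ.measurable hs),
        withDensity_apply _ (hφ.measurable hs)]
    refine lintegral_congr fun w => ?_
    simp only [Pi.mul_apply]
    rw [← ENNReal.ofReal_mul (hρ0 w).le]
    congr 1
    have := (hρ0 w).ne'
    field_simp
  have hcont2 : Continuous fun w => r w * (ρ' (ψ w) / ρ (ψ w)) := hr.mul hcR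
  rw [densityMeasure, withDensity_eq_iff_of_sigmaFinite hr'.measurable.ennreal_ofReal.aemeasurable
    hcont2.measurable.ennreal_ofReal.aemeasurable] at key
  have key2 : r' =ᵐ[volume] fun w => r w * (ρ' (ψ w) / ρ (ψ w)) := by
    filter_upwards [key] with w hw
    have hpos : 0 < r w * (ρ' (ψ w) / ρ (ψ w)) :=
      mul_pos (hr0 w) (div_pos (hρ0' _) (hρ0 _))
    exact (ENNReal.ofReal_eq_ofReal_iff (hr0' w).le hpos.le).1 hw
  have key3 := (hr'.ae_eq_iff_eq volume hcont2).1 key2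
  have := congrFun key3 w
  rw [this]
  have := (hr0 w).ne'
  field_simp

/-- Analytic core: one coordinate depends only on one coordinate. -/
lemma depends_one {d : ℕ} {φ ψ : (Fin d → ℝ) → (Fin d → ℝ)}
    (hφ : ContDiff ℝ 1 φ) (hψ : Continuous ψ) (h1 : ∀ z, ψ (φ z) = z) (h2 : ∀ w, φ (ψ w) = w)
    (k i : Fin d) (u v : ℝ → ℝ) (hv : Differentiable ℝ v)
    (hv0 : ∀ᵐ w : Fin d → ℝ, deriv v (w i) ≠ 0)
    (huv : ∀ z, u (z k) = v (φ z i)) (z w : Fin d → ℝ) (hzw : z k = w k) :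
    φ z i = φ w i := by
  have hφd : Differentiable ℝ φ := hφ.differentiable (by norm_num)
  have hdense : Dense {w : Fin d → ℝ | deriv v (w i) ≠ 0} := Measure.dense_of_ae hv0
  let H : (Fin d → ℝ) ≃ₜ (Fin d → ℝ) :=
    { toFun := φ, invFun := ψ, left_inv := h1, right_inv := h2
      continuous_toFun := hφ.continuous, continuous_invFun := hψ }
  have hdense' : Dense (φ ⁻¹' {w : Fin d → ℝ | deriv v (w i) ≠ 0}) :=
    hdense.preimage H.isOpenMap
  have hline : ∀ (e x : Fin d → ℝ) (s : ℝ), HasDerivAt (fun s : ℝ => φ (x + s • e) i)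
      (fderiv ℝ φ (x + s • e) e i) s := by
    intro e x s
    have ha : HasDerivAt (fun s : ℝ => x + s • e) e s := by
      simpa using ((hasDerivAt_id s).smul_const e).const_add x
    have hb := (hφd (x + s • e)).hasFDerivAt.comp_hasDerivAt s ha
    exact (hasDerivAt_pi.1 hb) i
  have hzero : ∀ e : Fin d → ℝ, e k = 0 → ∀ x, fderiv ℝ φ x e i = 0 := by
    intro e he
    have hc : Continuous fun x => fderiv ℝ φ x e i :=
      (continuous_apply i).comp ((hφ.continuous_fderiv (by norm_num)).clm_apply continuous_const)
    have := Continuous.ext_on hdense' hc (continuous_const (y := (0 : ℝ))) ?_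
    · exact fun x => congrFun this x
    · intro x hx
      have hl := hline e x 0
      have hcomp := HasDerivAt.comp (0 : ℝ) (hv (φ (x + (0 : ℝ) • e) i)).hasDerivAt hl
      have hconst : (v ∘ fun s : ℝ => φ (x + s • e) i) = fun _ => u (x k) := by
        funext s
        simp [← huv, he]
      rw [hconst] at hcomp
      have h0 := hcomp.unique (hasDerivAt_const (0 : ℝ) (u (x k)))
      simp only [zero_smul, add_zero] at h0
      exact (mul_eq_zero.1 h0).resolve_left hx
  have hd : ∀ s : ℝ, HasDerivAt (fun s : ℝ => φ (z + s • (w - z)) i) 0 s := by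
    intro s
    have := hline (w - z) z s
    rwa [hzero (w - z) (by simp [hzw])] at this
  have := is_const_of_deriv_eq_zero (fun s => (hd s).differentiableAt) (fun s => (hd s).deriv) 0 1
  simpa using this

lemma iic_inj {μ : Measure ℝ} [IsProbabilityMeasure μ] [μ.IsOpenPosMeasure] {a b : ℝ}
    (h : μ (Set.Iic a) = μ (Set.Iic b)) : a = b := by
  have key : ∀ a b : ℝ, a < b → μ (Set.Iic a) ≠ μ (Set.Iic b) := by
    intro a b hab h
    have h1 : μ (Set.Iic a) + μ (Set.Ioc a b) = μ (Set.Iic b) := by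
      rw [← measure_union (Set.Iic_disjoint_Ioc le_rfl) measurableSet_Ioc,
        Set.Iic_union_Ioc_eq_Iic hab.le]
    have h2 : 0 < μ (Set.Ioc a b) :=
      lt_of_lt_of_le (isOpen_Ioo.measure_pos μ (Set.nonempty_Ioo.2 hab))
        (measure_mono Set.Ioo_subset_Ioc_self)
    have h3 := ENNReal.lt_add_right (measure_ne_top μ (Set.Iic a)) h2.ne'
    rw [h1, h] at h3
    exact lt_irrefl _ h3
  rcases lt_trichotomy a b with hab | hab | hab
  · exact absurd h (key a b hab)
  · exact hab
  · exact absurd h.symm (key b a hab)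

lemma ici_inj {μ : Measure ℝ} [IsProbabilityMeasure μ] [μ.IsOpenPosMeasure] {a b : ℝ}
    (h : μ (Set.Ici a) = μ (Set.Ici b)) : a = b := by
  have key : ∀ a b : ℝ, a < b → μ (Set.Ici a) ≠ μ (Set.Ici b) := by
    intro a b hab h
    have h1 : μ (Set.Ici b) + μ (Set.Ico a b) = μ (Set.Ici a) := by
      rw [add_comm, ← measure_union _ measurableSet_Ici, Set.Ico_union_Ici_eq_Ici hab.le]
      exact Set.disjoint_left.2 fun x hx hx' => absurd hx.2 (not_lt.2 hx')
    have h2 : 0 < μ (Set.Ico a b) :=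
      lt_of_lt_of_le (isOpen_Ioo.measure_pos μ (Set.nonempty_Ioo.2 hab))
        (measure_mono Set.Ioo_subset_Ico_self)
    have h3 := ENNReal.lt_add_right (measure_ne_top μ (Set.Ici b)) h2.ne'
    rw [h1, h] at h3
    exact lt_irrefl _ h3
  rcases lt_trichotomy a b with hab | hab | hab
  · exact absurd h (key a b hab)
  · exact hab
  · exact absurd h.symm (key b a hab)

/-- Fibre statement: given the other coordinates, the law of the remaining output
coordinate does not depend on them. -/
lemma fibre_law {m : ℕ} (μ ν : Fin (m + 1) → Measure ℝ) [∀ i, IsProbabilityMeasure (μ i)]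
    [∀ i, IsProbabilityMeasure (ν i)]
    {φ ψ : (Fin (m + 1) → ℝ) → (Fin (m + 1) → ℝ)} (hφ : Continuous φ) (hψ : Continuous ψ)
    (h1 : ∀ z, ψ (φ z) = z)
    (hm : Measure.map φ (Measure.pi μ) = Measure.pi ν)
    (l l' : Fin (m + 1))
    (dψ : ∀ j, j ≠ l → ∀ w w' : Fin (m + 1) → ℝ, (∀ i, i ≠ l' → w i = w' i) → ψ w j = ψ w' j)
    (B : Set ℝ) (hB : MeasurableSet B) :
    ∀ᵐ x ∂(Measure.pi fun k => μ (l.succAbove k)),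
      μ l {t | φ (l.insertNth t x : Fin (m + 1) → ℝ) l' ∈ B} = ν l' B := by
  have hins : Continuous fun y : ℝ × (Fin m → ℝ) =>
      (l.insertNth y.1 y.2 : Fin (m + 1) → ℝ) :=
    Continuous.finInsertNth l continuous_fst continuous_snd
  have hF : Continuous fun y : ℝ × (Fin m → ℝ) =>
      φ (l.insertNth y.1 y.2 : Fin (m + 1) → ℝ) l' :=
    (continuous_apply l').comp (hφ.comp hins)
  have hind : ProbabilityTheory.IndepFun
      (fun (w : Fin (m + 1) → ℝ) (k : Fin m) => ψ w (l.succAbove k)) (fun w => w l')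
      (Measure.pi ν) := by
    have hi : ProbabilityTheory.iIndepFun (fun (i : Fin (m + 1)) (w : Fin (m + 1) → ℝ) => w i)
        (Measure.pi ν) :=
      ProbabilityTheory.iIndepFun_pi (X := fun _ x => x) fun i => aemeasurable_id
    have hfin := hi.indepFun_finset ({l'}ᶜ : Finset (Fin (m + 1))) {l'}
      (disjoint_compl_left) (fun i => measurable_pi_apply i)
    let G : (({l'}ᶜ : Finset (Fin (m + 1))) → ℝ) → (Fin m → ℝ) := fun y k =>
      ψ (fun i => if h : i ∈ ({l'}ᶜ : Finset (Fin (m + 1))) then y ⟨i, h⟩ else 0) (l.succAbove k)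
    have hG : Measurable G := by
      refine Continuous.measurable (continuous_pi fun k => (continuous_apply _).comp
        (hψ.comp (continuous_pi fun i => ?_)))
      by_cases h : i ∈ ({l'}ᶜ : Finset (Fin (m + 1)))
      · simp only [h, dif_pos]; exact continuous_apply _
      · simp only [h, dif_neg, not_false_eq_true]; exact continuous_const
    have hc := hfin.comp hG (measurable_pi_apply (⟨l', by simp⟩ : ({l'} : Finset (Fin (m + 1)))))
    have hEq : (fun (w : Fin (m + 1) → ℝ) (k : Fin m) => ψ w (l.succAbove k)) =
        G ∘ fun (a : Fin (m + 1) → ℝ) (i : ({l'}ᶜ : Finset (Fin (m + 1)))) => a i := by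
      funext w k
      simp only [Function.comp, G]
      refine dψ _ (Fin.succAbove_ne l k) _ _ fun i hi => ?_
      simp [hi]
    rw [hEq]
    exact hc
  have hGm : Measurable (fun (w : Fin (m + 1) → ℝ) (k : Fin m) => ψ w (l.succAbove k)) :=
    measurable_pi_iff.2 fun k => (measurable_pi_apply _).comp hψ.measurable
  have hkey : ∀ A : Set (Fin m → ℝ), MeasurableSet A →
      Measure.pi μ {z | (fun k => z (l.succAbove k)) ∈ A ∧ φ z l' ∈ B} =
      Measure.pi μ {z | (fun k => z (l.succAbove k)) ∈ A} * ν l' B := by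
    intro A hA
    have e := hind.measure_inter_preimage_eq_mul A B hA hB
    rw [← hm, Measure.map_apply hφ.measurable
        ((hGm hA).inter ((measurable_pi_apply l') hB)),
      Measure.map_apply hφ.measurable (hGm hA), hm] at e
    have e3 : Measure.pi ν ((fun w => w l') ⁻¹' B) = ν l' B :=
      (measurePreserving_eval ν l').measure_preimage hB.nullMeasurableSet
    rw [e3] at e
    simpa [Set.preimage, h1] using e
  have hpres := measurePreserving_piFinSuccAbove μ l
  have hsplit : ∀ S : Set (ℝ × (Fin m → ℝ)), MeasurableSet S →
      Measure.pi μ {z | (z l, fun k => z (l.succAbove k)) ∈ S} =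
        ∫⁻ x, μ l {t | (t, x) ∈ S} ∂(Measure.pi fun k => μ (l.succAbove k)) := by
    intro S hS
    have := hpres.measure_preimage hS.nullMeasurableSet
    rw [Measure.prod_apply_symm hS] at this
    exact this
  have hmeas : Measurable fun x : Fin m → ℝ =>
      μ l {t | φ (l.insertNth t x : Fin (m + 1) → ℝ) l' ∈ B} :=
    measurable_measure_prodMk_right (hF.measurable hB)
  refine ae_eq_of_forall_setLIntegral_eq_of_sigmaFinite hmeas measurable_const fun A hA _ => ?_
  have s1 := hsplit {y | y.2 ∈ A ∧ φ (l.insertNth y.1 y.2 : Fin (m + 1) → ℝ) l' ∈ B}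
    ((measurable_snd hA).inter (hF.measurable hB))
  have s2 := hsplit {y | y.2 ∈ A} (measurable_snd hA)
  have hz : ∀ z : Fin (m + 1) → ℝ,
      (l.insertNth (z l) (fun k => z (l.succAbove k)) : Fin (m + 1) → ℝ) = z := by
    intro z
    exact Fin.insertNth_self_removeNth l z
  simp only [Set.mem_ofPred_eq, hz] at s1 s2
  rw [hkey A hA, s2] at s1
  rw [← lintegral_indicator hA, setLIntegral_const]
  have a1 : (∫⁻ x, μ l {t | x ∈ A} ∂(Measure.pi fun k => μ (l.succAbove k)))
      = (Measure.pi fun k => μ (l.succAbove k)) A := by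
    rw [← lintegral_indicator_one hA]
    refine lintegral_congr fun x => ?_
    by_cases hx : x ∈ A <;> simp [hx]
  rw [a1] at s1
  rw [mul_comm, s1]
  refine lintegral_congr fun x => ?_
  by_cases hx : x ∈ A <;> simp [hx]

lemma last_coord {m : ℕ} (μ ν : Fin (m + 1) → Measure ℝ) [∀ i, IsProbabilityMeasure (μ i)]
    [∀ i, IsProbabilityMeasure (ν i)] [∀ i, (μ i).IsOpenPosMeasure]
    {φ ψ : (Fin (m + 1) → ℝ) → (Fin (m + 1) → ℝ)} (hφ : Continuous φ) (hψ : Continuous ψ)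
    (h1 : ∀ z, ψ (φ z) = z) (h2 : ∀ w, φ (ψ w) = w)
    (hm : Measure.map φ (Measure.pi μ) = Measure.pi ν)
    (l l' : Fin (m + 1))
    (dφ : ∀ j, j ≠ l' → ∀ z z' : Fin (m + 1) → ℝ, (∀ i, i ≠ l → z i = z' i) → φ z j = φ z' j)
    (dψ : ∀ j, j ≠ l → ∀ w w' : Fin (m + 1) → ℝ, (∀ i, i ≠ l' → w i = w' i) → ψ w j = ψ w' j)
    (w w' : Fin (m + 1) → ℝ) (hw : w l' = w' l') : ψ w l = ψ w' l := by
  let I : ℝ → (Fin m → ℝ) → (Fin (m + 1) → ℝ) := fun t x => l.insertNth t x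
  have hIl : ∀ t x, I t x l = t := fun t x => by simp [I]
  have hIj : ∀ t x k, I t x (l.succAbove k) = x k :=
    fun t x k => by simp [I]
  have hI : ∀ s t x i, i ≠ l → I s x i = I t x i := by
    intro s t x i hi
    obtain ⟨k, rfl⟩ := Fin.exists_succAbove_eq hi
    rw [hIj, hIj]
  have hIc : Continuous fun y : ℝ × (Fin m → ℝ) => I y.1 y.2 :=
    Continuous.finInsertNth l continuous_fst continuous_snd
  let F : (Fin m → ℝ) → ℝ → ℝ := fun x t => φ (I t x) l'
  have hFc : ∀ x, Continuous (F x) := fun x =>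
    (continuous_apply l').comp (hφ.comp (hIc.comp (continuous_id.prodMk continuous_const)))
  have hFc' : ∀ t, Continuous fun x => F x t := fun t =>
    (continuous_apply l').comp (hφ.comp (hIc.comp (continuous_const.prodMk continuous_id)))
  have hFi : ∀ x, Function.Injective (F x) := by
    intro x s t hst
    have : φ (I s x) = φ (I t x) := by
      funext j
      by_cases hj : j = l'
      · subst hj; exact hst
      · exact dφ j hj _ _ (hI s t x)
    have h := congrArg ψ this
    rw [h1, h1] at h
    have := congrFun h l
    rwa [hIl, hIl] at this
  let H : (Fin m → ℝ) → ℝ → ℝ := fun x b => ψ (Function.update (φ (I 0 x)) l' b) l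
  have hHc : ∀ b, Continuous fun x => H x b := fun b =>
    (continuous_apply l).comp (hψ.comp (Continuous.update
      (hφ.comp (hIc.comp (continuous_const.prodMk continuous_id))) l' continuous_const))
  have hHI : ∀ x b, I (H x b) x = ψ (Function.update (φ (I 0 x)) l' b) := by
    intro x b
    funext j
    by_cases hj : j = l
    · subst hj; rw [hIl]
    · rw [dψ j hj _ (φ (I 0 x)) (fun i hi => by simp [hi]), h1]
      exact hI _ _ _ _ hj
  have hFH : ∀ x b, F x (H x b) = b := by
    intro x b
    simp only [F]
    rw [hHI, h2]; simp
  have hmain : ∀ b, ∀ x y, H x b = H y b := by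
    intro b
    have hae := fibre_law μ ν hφ hψ h1 hm l l' dψ (Set.Iic b) measurableSet_Iic
    change ∀ᵐ x ∂(Measure.pi fun k => μ (l.succAbove k)), μ l {t | F x t ≤ b} = ν l' (Set.Iic b)
      at hae
    have hdense : Dense {x | μ l {t | F x t ≤ b} = ν l' (Set.Iic b)} := Measure.dense_of_ae hae
    have hdir : (∀ x, StrictMono (F x)) ∨ (∀ x, StrictAnti (F x)) := by
      by_cases hpos : ∀ x, F x 0 < F x 1
      · left; intro x
        rcases (hFc x).strictMono_of_inj (hFi x) with h | h
        · exact h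
        · exact absurd (h zero_lt_one) (not_lt.2 (hpos x).le)
      · by_cases hneg : ∀ x, F x 1 < F x 0
        · right; intro x
          rcases (hFc x).strictMono_of_inj (hFi x) with h | h
          · exact absurd (h zero_lt_one) (not_lt.2 (hneg x).le)
          · exact h
        · exfalso
          push Not at hpos hneg
          obtain ⟨x, hx⟩ := hpos
          obtain ⟨y, hy⟩ := hneg
          obtain ⟨c, hc⟩ := mem_range_of_exists_le_of_exists_ge
            ((hFc' 1).sub (hFc' 0)) ⟨x, sub_nonpos.2 hx⟩ ⟨y, sub_nonneg.2 hy⟩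
          have := hFi c (sub_eq_zero.1 hc)
          norm_num at this
    have hconst : ∀ x ∈ {x | μ l {t | F x t ≤ b} = ν l' (Set.Iic b)},
        ∀ y ∈ {x | μ l {t | F x t ≤ b} = ν l' (Set.Iic b)}, H x b = H y b := by
      intro x hx y hy
      have hxy : μ l {t | F x t ≤ b} = μ l {t | F y t ≤ b} := hx.trans hy.symm
      rcases hdir with hd | hd
      · have e : ∀ x, {t | F x t ≤ b} = Set.Iic (H x b) := by
          intro x; ext t
          rw [Set.mem_ofPred_eq, Set.mem_Iic, ← (hd x).le_iff_le (a := t) (b := H x b), hFH]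
        rw [e, e] at hxy
        exact iic_inj hxy
      · have e : ∀ x, {t | F x t ≤ b} = Set.Ici (H x b) := by
          intro x; ext t
          rw [Set.mem_ofPred_eq, Set.mem_Ici, ← (hd x).le_iff_ge (a := t) (b := H x b), hFH]
        rw [e, e] at hxy
        exact ici_inj hxy
    obtain ⟨x₀, hx₀⟩ := hdense.nonempty
    have := Continuous.ext_on hdense (hHc b) (continuous_const (y := H x₀ b))
      fun x hx => hconst x hx x₀ hx₀
    intro x y
    rw [congrFun this x, congrFun this y]
  have hfin : ∀ w, ψ w l = H 0 (w l') := by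
    intro w
    let x : Fin m → ℝ := fun k => ψ w (l.succAbove k)
    rw [hmain _ 0 x]
    simp only [H]
    congr 2
    funext j
    by_cases hj : j = l'
    · subst hj; simp
    · rw [Function.update_of_ne hj]
      conv_lhs => rw [← h2 w]
      refine dφ j hj _ _ fun i hi => ?_
      obtain ⟨k, rfl⟩ := Fin.exists_succAbove_eq hi
      rw [hIj]
  rw [hfin, hfin, hw]

lemma assemble {d : ℕ} {φ ψ : (Fin d → ℝ) → (Fin d → ℝ)}
    (hφ : ContDiff ℝ 1 φ) (hψ : ContDiff ℝ 1 ψ) (h1 : ∀ z, ψ (φ z) = z) (h2 : ∀ w, φ (ψ w) = w)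
    (σ : Equiv.Perm (Fin d))
    (dφ : ∀ j, ∀ z z' : Fin d → ℝ, z j = z' j → φ z (σ j) = φ z' (σ j))
    (dψ : ∀ j, ∀ w w' : Fin d → ℝ, w (σ j) = w' (σ j) → ψ w j = ψ w' j) : InSReparam φ := by
  have hcst : ContDiff ℝ 1 (fun (t : ℝ) (_ : Fin d) => t) := contDiff_pi.2 fun _ => contDiff_id
  refine ⟨σ.symm, fun j t => φ (fun _ => t) (σ j), fun j => ⟨?_, fun s => ψ (fun _ => s) j, ?_,
    fun t => ?_, fun s => ?_⟩, fun z i => ?_⟩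
  · exact contDiff_pi.1 (hφ.comp hcst) (σ j)
  · exact contDiff_pi.1 (hψ.comp hcst) j
  · simp only
    rw [dψ j (fun _ => φ (fun _ => t) (σ j)) (φ fun _ => t) rfl, h1]
  · simp only
    rw [dφ j (fun _ => ψ (fun _ => s) j) (ψ fun _ => s) rfl, h2]
  · have := dφ (σ.symm i) z (fun _ => z (σ.symm i)) rfl
    simpa using this

/-- Difference of log densities. -/
def logdiff (r s : ℝ → ℝ) (t : ℝ) : ℝ := Real.log (r t) - Real.log (s t)

lemma log_diff {r : ℝ → ℝ} (hr : IsC1Density r) : Differentiable ℝ fun t => Real.log (r t) :=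
  (hr.2.1.differentiable (by norm_num)).log fun x => (hr.1 x).ne'

lemma logdiff_diff {r s : ℝ → ℝ} (hr : IsC1Density r) (hs : IsC1Density s) :
    Differentiable ℝ (logdiff r s) := (log_diff hr).sub (log_diff hs)

lemma logdiff_deriv {r s : ℝ → ℝ} (hr : IsC1Density r) (hs : IsC1Density s) (x : ℝ) :
    deriv (logdiff r s) x = deriv (fun t => Real.log (r t)) x - deriv (fun t => Real.log (s t)) x :=
  ((log_diff hr x).hasDerivAt.sub (log_diff hs x).hasDerivAt).deriv

lemma cont_prod {d : ℕ} {p : Fin d → ℝ → ℝ} (hp : ∀ i, IsC1Density (p i)) :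
    Continuous fun z : Fin d → ℝ => ∏ i, p i (z i) :=
  continuous_finsetProd _ fun i _ => (hp i).2.1.continuous.comp (continuous_apply i)

lemma cont_prod' {d : ℕ} {p : Fin d → ℝ → ℝ} {r : ℝ → ℝ} (hp : ∀ i, IsC1Density (p i))
    (hr : IsC1Density r) (c : Fin d) :
    Continuous fun z : Fin d → ℝ => r (z c) * ∏ i ∈ ({c} : Finset (Fin d))ᶜ, p i (z i) :=
  (hr.2.1.continuous.comp (continuous_apply c)).mul
    (continuous_finsetProd _ fun i _ => (hp i).2.1.continuous.comp (continuous_apply i))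

lemma ratio_eq {d : ℕ} {p : Fin d → ℝ → ℝ} (hp : ∀ i, IsC1Density (p i))
    (a : ℝ) (c : Fin d) (z : Fin d → ℝ) :
    (a * ∏ i ∈ ({c} : Finset (Fin d))ᶜ, p i (z i)) / (∏ i, p i (z i)) = a / p c (z c) := by
  rw [Fintype.prod_eq_mul_prod_compl c]
  exact mul_div_mul_right _ _ (Finset.prod_pos fun i _ => (hp i).1 _).ne'

/-- **Proposition (nonlinear ICA with matched intervention targets).** (Here the dimension is
`d = m + 1 ≥ 1`; the first model's targets are the first `d − 1` variables `k.castSucc` for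
`k : Fin m`, and the second model's targets are `σ (k.castSucc)` for an unknown permutation
`σ` of `[d]`.) The latent graph is empty; assume the general interventional discrepancy:
for every `k` and every `i`, a.e. `z`, `(log p i)′ (z i) ≠ (log pt k)′ (z k.castSucc)`, and
likewise `(log q i)′ (z i) ≠ (log qt k)′ (z (σ k.castSucc))`. If `f`, `f′` are C¹
diffeomorphisms with matching pushforwards in all regimes, then `f′⁻¹ ∘ f ∈ S_reparam`. -/
theorem ica_matched_targets_identifiability_reparam {m : ℕ}
    (σ : Equiv.Perm (Fin (m + 1)))
    (p q : Fin (m + 1) → ℝ → ℝ)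
    (hp : ∀ i, IsC1Density (p i)) (hq : ∀ i, IsC1Density (q i))
    (pt qt : Fin m → ℝ → ℝ)
    (hpt : ∀ k, IsC1Density (pt k)) (hqt : ∀ k, IsC1Density (qt k))
    (hdiscp : ∀ (k : Fin m) (i : Fin (m + 1)), ∀ᵐ (z : Fin (m + 1) → ℝ) ∂volume,
        deriv (fun t => Real.log (p i t)) (z i) ≠
          deriv (fun t => Real.log (pt k t)) (z k.castSucc))
    (hdiscq : ∀ (k : Fin m) (i : Fin (m + 1)), ∀ᵐ (z : Fin (m + 1) → ℝ) ∂volume,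
        deriv (fun t => Real.log (q i t)) (z i) ≠
          deriv (fun t => Real.log (qt k t)) (z (σ k.castSucc)))
    (f f' g' : (Fin (m + 1) → ℝ) → (Fin (m + 1) → ℝ))
    (hf : IsC1Diffeo f) (hf' : ContDiff ℝ 1 f') (hg' : ContDiff ℝ 1 g')
    (hinv₁ : Function.LeftInverse g' f') (hinv₂ : Function.RightInverse g' f')
    (hmatch0 : Measure.map f (densityMeasure fun z => ∏ i, p i (z i)) =
        Measure.map f' (densityMeasure fun z => ∏ i, q i (z i)))
    (hmatch : ∀ k : Fin m,
        Measure.map f (densityMeasure fun z =>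
            pt k (z k.castSucc) *
              ∏ i ∈ ({k.castSucc} : Finset (Fin (m + 1)))ᶜ, p i (z i)) =
        Measure.map f' (densityMeasure fun z =>
            qt k (z (σ k.castSucc)) *
              ∏ i ∈ ({σ k.castSucc} : Finset (Fin (m + 1)))ᶜ, q i (z i))) :
    InSReparam (g' ∘ f) := by
  obtain ⟨hfc, g, hgc, hgf, hfg⟩ := hf
  have hφ : ContDiff ℝ 1 (g' ∘ f) := hg'.comp hfc
  have hψ : ContDiff ℝ 1 (g ∘ f') := hgc.comp hf'
  have h1 : ∀ z, (g ∘ f') ((g' ∘ f) z) = z := fun z => by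
    simp only [Function.comp]; rw [hinv₂, hgf]
  have h2 : ∀ w, (g' ∘ f) ((g ∘ f') w) = w := fun w => by
    simp only [Function.comp]; rw [hfg, hinv₁]
  have hpush : ∀ P Q : Measure (Fin (m + 1) → ℝ), Measure.map f P = Measure.map f' Q →
      Measure.map (g' ∘ f) P = Q := by
    intro P Q h
    rw [← Measure.map_map hg'.continuous.measurable hfc.continuous.measurable, h,
      Measure.map_map hg'.continuous.measurable hf'.continuous.measurable, hinv₁.comp_eq_id,
      Measure.map_id]
  have hm0 := hpush _ _ hmatch0
  generalize hΦ : g' ∘ f = φ at *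
  generalize hΨ : g ∘ f' = ψ at *
  have hratio : ∀ (k : Fin m) (w : Fin (m + 1) → ℝ),
      logdiff (pt k) (p k.castSucc) (ψ w k.castSucc) =
        logdiff (qt k) (q (σ k.castSucc)) (w (σ k.castSucc)) := by
    intro k w
    have hmk := hpush _ _ (hmatch k)
    have hr := ratio_match (cont_prod hp) (cont_prod' hp (hpt k) _) (cont_prod hq)
      (cont_prod' hq (hqt k) _) (fun z => Finset.prod_pos fun i _ => (hp i).1 _)
      (fun z => mul_pos ((hpt k).1 _) (Finset.prod_pos fun i _ => (hp i).1 _))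
      (fun z => Finset.prod_pos fun i _ => (hq i).1 _)
      (fun z => mul_pos ((hqt k).1 _) (Finset.prod_pos fun i _ => (hq i).1 _))
      hφ.continuous hψ.continuous h1 hm0 hmk w
    rw [ratio_eq hp, ratio_eq hq] at hr
    unfold logdiff
    rw [← Real.log_div ((hpt k).1 _).ne' ((hp _).1 _).ne',
      ← Real.log_div ((hqt k).1 _).ne' ((hq _).1 _).ne', hr]
  have dφ0 : ∀ (k : Fin m) (z z' : Fin (m + 1) → ℝ), z k.castSucc = z' k.castSucc →
      φ z (σ k.castSucc) = φ z' (σ k.castSucc) := by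
    intro k z z' hz
    refine depends_one hφ hψ.continuous h1 h2 k.castSucc (σ k.castSucc)
      (logdiff (pt k) (p k.castSucc)) (logdiff (qt k) (q (σ k.castSucc)))
      (logdiff_diff (hqt k) (hq _)) ?_ (fun z => ?_) z z' hz
    · filter_upwards [hdiscq k (σ k.castSucc)] with w hw
      rw [logdiff_deriv (hqt k) (hq _)]
      exact sub_ne_zero.2 (Ne.symm hw)
    · rw [← hratio, h1]
  have dψ0 : ∀ (k : Fin m) (w w' : Fin (m + 1) → ℝ), w (σ k.castSucc) = w' (σ k.castSucc) →
      ψ w k.castSucc = ψ w' k.castSucc := by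
    intro k w w' hw
    refine depends_one hψ hφ.continuous h2 h1 (σ k.castSucc) k.castSucc
      (logdiff (qt k) (q (σ k.castSucc))) (logdiff (pt k) (p k.castSucc))
      (logdiff_diff (hpt k) (hp _)) ?_ (fun w => (hratio k w).symm) w w' hw
    filter_upwards [hdiscp k k.castSucc] with w hw
    rw [logdiff_deriv (hpt k) (hp _)]
    exact sub_ne_zero.2 (Ne.symm hw)
  have hcs : ∀ j, j ≠ Fin.last m → ∃ k : Fin m, k.castSucc = j :=
    fun j hj => Fin.exists_castSucc_eq.2 hj
  have dφ1 : ∀ j, j ≠ σ (Fin.last m) → ∀ z z' : Fin (m + 1) → ℝ,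
      (∀ i, i ≠ Fin.last m → z i = z' i) → φ z j = φ z' j := by
    intro j hj z z' hz
    obtain ⟨k, hk⟩ := hcs (σ.symm j) (fun h => hj (by rw [← h]; simp))
    obtain rfl : j = σ k.castSucc := by rw [hk]; simp
    exact dφ0 k z z' (hz _ (Fin.castSucc_lt_last k).ne)
  have dψ1 : ∀ j, j ≠ Fin.last m → ∀ w w' : Fin (m + 1) → ℝ,
      (∀ i, i ≠ σ (Fin.last m) → w i = w' i) → ψ w j = ψ w' j := by
    intro j hj w w' hw
    obtain ⟨k, rfl⟩ := hcs j hj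
    exact dψ0 k w w' (hw _ fun h => (Fin.castSucc_lt_last k).ne (σ.injective h))
  rw [dens_pi hp, dens_pi hq] at hm0
  have i1 := fun i => dens_prob (hp i)
  have i2 := fun i => dens_prob (hq i)
  have i3 := fun i => dens_openpos (hp i)
  have i4 := fun i => dens_openpos (hq i)
  have hm1 : Measure.map ψ (Measure.pi fun i => densityMeasure₁ (q i)) =
      Measure.pi fun i => densityMeasure₁ (p i) := by
    rw [← hm0, Measure.map_map hψ.continuous.measurable hφ.continuous.measurable,
      show ψ ∘ φ = id from funext h1, Measure.map_id]
  refine assemble hφ hψ h1 h2 σ ?_ ?_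
  · intro j z z' hz
    by_cases hj : j = Fin.last m
    · subst hj
      exact last_coord _ _ hψ.continuous hφ.continuous h2 h1 hm1 (σ (Fin.last m)) (Fin.last m)
        dψ1 dφ1 z z' hz
    · obtain ⟨k, rfl⟩ := hcs j hj
      exact dφ0 k z z' hz
  · intro j w w' hw
    by_cases hj : j = Fin.last m
    · subst hj
      exact last_coord _ _ hφ.continuous hψ.continuous h1 h2 hm0 (Fin.last m) (σ (Fin.last m))
        dφ1 dψ1 w w' hw
    · obtain ⟨k, rfl⟩ := hcs j hj
      exact dψ0 k w w' hw
end
end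

section
/- Let G be a DAG on [d] with a C¹ conditional-density family (p_i), perfect intervened strictly positive C¹ densities p̃_k on every node k ∈ [d] giving interventional joints p^k (and unintervened p^0), and let f : ℝ^d → ℝ^d be a C¹ diffeomorphism. For each k ∈ [d], prescribe a probability distribution M_k on ℝ with continuous strictly positive density, to be matched either by the intervened mechanism of node k or — only if pa(k) = ∅ — alternatively by the observational mechanism of node k (at most one prescription per node k). Then there exist T ∈ S_scaling and a second model consisting of a strictly positive conditional-density family (q_i) for G with perfect intervened densities q̃_k and interventional joints q^k, such that, with f′ := f ∘ T⁻¹: f_*P^k = f′_*Q^k for every k ∈ {0,…,d}; f′⁻¹∘f = T ∈ S_scaling; and every prescribed mechanism is attained, i.e., the measure with density q̃_k equals M_k for each node where the intervened mechanism was prescribed, and the measure with density q_k equals M_k for each root node where the observational mechanism was prescribed. -/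
open MeasureTheory

noncomputable section

theorem cdf_facts (r : ℝ → ℝ) (hc : Continuous r) (hpos : ∀ x, 0 < r x) (hint : (∫ x, r x) = 1) :
    ∃ F : ℝ → ℝ, (∀ x, HasStrictDerivAt F (r x) x) ∧ StrictMono F ∧
      Set.range F = Set.Ioo 0 1 := by
  have hI : Integrable r := by
    by_contra h
    rw [integral_undef h] at hint
    exact zero_ne_one hint
  have hd : ∀ x, HasStrictDerivAt (fun x => (∫ t in Set.Iic (0:ℝ), r t) + ∫ t in (0:ℝ)..x, r t)
      (r x) x := fun x => by
    exact (intervalIntegral.integral_hasStrictDerivAt_right (hc.intervalIntegrable _ _)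
      hc.stronglyMeasurable.stronglyMeasurableAtFilter hc.continuousAt).const_add _
  have hm : StrictMono (fun x => (∫ t in Set.Iic (0:ℝ), r t) + ∫ t in (0:ℝ)..x, r t) :=
    strictMono_of_deriv_pos fun x => by
      rw [(hd x).hasDerivAt.deriv]; exact hpos x
  refine ⟨fun x => (∫ t in Set.Iic (0:ℝ), r t) + ∫ t in (0:ℝ)..x, r t, hd, hm, ?_⟩
  set F := fun x => (∫ t in Set.Iic (0:ℝ), r t) + ∫ t in (0:ℝ)..x, r t with hF
  have hcont : Continuous F := continuous_iff_continuousAt.2 fun x => (hd x).hasDerivAt.continuousAt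
  have htop : Filter.Tendsto F Filter.atTop (nhds 1) := by
    have h1 := (intervalIntegral_tendsto_integral_Ioi 0 hI.integrableOn
      (Filter.tendsto_id (α := ℝ) (x := Filter.atTop))).const_add (∫ t in Set.Iic (0:ℝ), r t)
    rw [intervalIntegral.integral_Iic_add_Ioi hI.integrableOn hI.integrableOn, hint] at h1
    exact h1
  have hbot : Filter.Tendsto F Filter.atBot (nhds 0) := by
    have h1 := (intervalIntegral_tendsto_integral_Iic 0 hI.integrableOn
      (Filter.tendsto_id (α := ℝ) (x := Filter.atBot))).const_sub (∫ t in Set.Iic (0:ℝ), r t)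
    rw [sub_self] at h1
    refine h1.congr fun x => ?_
    simp only [hF, id]
    rw [intervalIntegral.integral_symm 0 x]; ring
  ext c
  constructor
  · rintro ⟨x, rfl⟩
    constructor
    · exact lt_of_le_of_lt (hm.monotone.le_of_tendsto hbot (x - 1)) (hm (by linarith))
    · exact lt_of_lt_of_le (hm (show x < x + 1 by linarith)) (hm.monotone.ge_of_tendsto htop (x + 1))
  · rintro ⟨h0, h1⟩
    obtain ⟨a, ha⟩ := (hbot.eventually_lt_const h0).exists
    obtain ⟨b, hb⟩ := (htop.eventually_const_lt h1).exists
    exact mem_range_of_exists_le_of_exists_ge hcont ⟨a, ha.le⟩ ⟨b, hb.le⟩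

theorem transport_deriv {F G : ℝ → ℝ} {r m : ℝ → ℝ} (hF : ∀ x, HasStrictDerivAt F (r x) x)
    (hG : ∀ x, HasStrictDerivAt G (m x) x) (hr : ∀ x, 0 < r x) (hrc : Continuous r)
    (hmc : Continuous m)
    (hFm : StrictMono F) (hGm : StrictMono G) (S : ℝ → ℝ) (hS : Function.Surjective S)
    (h : ∀ x, F (S x) = G x) :
    ContDiff ℝ 1 S ∧ ∀ x, HasDerivAt S (m x / r (S x)) x := by
  have hmono : Monotone S := fun a b hab => hFm.le_iff_le.1 (by
    rw [h, h]; exact hGm.monotone hab)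
  have hSc : Continuous S := hmono.continuous_of_surjective hS
  have hd : ∀ x, HasDerivAt S (m x / r (S x)) x := by
    intro x
    have hinv := ((hF (S x)).to_localInverse (hr (S x)).ne').hasDerivAt
    have hev := (hF (S x)).eventually_left_inverse (hr (S x)).ne'
    rw [h] at hinv
    have hcomp := hinv.comp x (hG x).hasDerivAt
    have : (m x / r (S x)) = (r (S x))⁻¹ * m x := by field_simp
    rw [this]
    refine hcomp.congr_of_eventuallyEq ?_
    filter_upwards [hSc.continuousAt.eventually hev] with y hy
    rw [h] at hy
    exact hy.symm
  refine ⟨?_, hd⟩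
  rw [contDiff_one_iff_deriv]
  refine ⟨fun x => (hd x).differentiableAt, ?_⟩
  have : deriv S = fun x => m x / r (S x) := funext fun x => (hd x).deriv
  rw [this]
  exact hmc.div (hrc.comp hSc) fun x => (hr _).ne'

theorem transport_exists (r m : ℝ → ℝ) (hrc : Continuous r) (hr : ∀ x, 0 < r x)
    (hri : (∫ x, r x) = 1) (hmc : Continuous m) (hm : ∀ x, 0 < m x) (hmi : (∫ x, m x) = 1) :
    ∃ T S S' : ℝ → ℝ, ContDiff ℝ 1 T ∧ ContDiff ℝ 1 S ∧ Function.LeftInverse S T ∧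
      Function.RightInverse S T ∧ (∀ x, HasDerivAt S (S' x) x) ∧ (∀ x, 0 < S' x) ∧
      ∀ x, r (S x) * S' x = m x := by
  obtain ⟨F, hF, hFm, hFr⟩ := cdf_facts r hrc hr hri
  obtain ⟨G, hG, hGm, hGr⟩ := cdf_facts m hmc hm hmi
  have e1 : ∀ x, ∃ y, F y = G x := fun x => by
    have : G x ∈ Set.range F := by rw [hFr, ← hGr]; exact ⟨x, rfl⟩
    exact this
  have e2 : ∀ x, ∃ y, G y = F x := fun x => by
    have : F x ∈ Set.range G := by rw [hGr, ← hFr]; exact ⟨x, rfl⟩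
    exact this
  choose S hS using e1
  choose T hT using e2
  have hl : Function.LeftInverse S T := fun x => hFm.injective (by rw [hS, hT])
  have hrr : Function.RightInverse S T := fun x => hGm.injective (by rw [hT, hS])
  obtain ⟨c1, d1⟩ := transport_deriv hF hG hr hrc hmc hFm hGm S hl.surjective hS
  obtain ⟨c2, d2⟩ := transport_deriv hG hF hm hmc hrc hGm hFm T hrr.surjective hT
  refine ⟨T, S, _, c2, c1, hl, hrr, d1, fun x => div_pos (hm x) (hr _), fun x => ?_⟩
  have := (hr (S x)).ne'
  field_simp

theorem integral_transport (S S' : ℝ → ℝ) (hd : ∀ x, HasDerivAt S (S' x) x)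
    (hpos : ∀ x, 0 < S' x) (hb : Function.Bijective S) (g : ℝ → ℝ) :
    (∫ x, g (S x) * S' x) = ∫ x, g x := by
  have h := integral_image_eq_integral_abs_deriv_smul (s := Set.univ) MeasurableSet.univ
    (fun x _ => (hd x).hasDerivWithinAt) hb.1.injOn g
  rw [Set.image_univ, hb.2.range_eq] at h
  simp only [Measure.restrict_univ, smul_eq_mul] at h
  rw [h]
  refine integral_congr_ae (Filter.Eventually.of_forall fun x => ?_)
  simp only [abs_of_pos (hpos x), mul_comm]

theorem map_transport {d : ℕ} (S S' : Fin d → ℝ → ℝ) (hd : ∀ i x, HasDerivAt (S i) (S' i x) x)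
    (hpos : ∀ i x, 0 < S' i x) (hb : ∀ i, Function.Bijective (S i))
    (ρ ρ' : (Fin d → ℝ) → ℝ)
    (h : ∀ z, ρ' z = ρ (fun i => S i (z i)) * ∏ i, S' i (z i)) :
    Measure.map (fun (z : Fin d → ℝ) i => S i (z i)) (densityMeasure ρ') = densityMeasure ρ := by
  have hSc : ∀ i, Continuous (S i) := fun i =>
    continuous_iff_continuousAt.2 fun x => (hd i x).continuousAt
  have hmeas : Measurable (fun (z : Fin d → ℝ) i => S i (z i)) :=
    (continuous_pi fun i => (hSc i).comp (continuous_apply i)).measurable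
  have hinj : Function.Injective (fun (z : Fin d → ℝ) i => S i (z i)) := fun a b hab =>
    funext fun i => (hb i).1 (congrFun hab i)
  have hsurj : Function.Surjective (fun (z : Fin d → ℝ) i => S i (z i)) := fun b => by
    choose a ha using fun i => (hb i).2 (b i)
    exact ⟨a, funext ha⟩
  have hfd : ∀ z : Fin d → ℝ, HasFDerivAt (fun (z : Fin d → ℝ) i => S i (z i))
      (ContinuousLinearMap.pi fun i => (ContinuousLinearMap.toSpanSingleton ℝ (S' i (z i))).comp
        (ContinuousLinearMap.proj (R := ℝ) (φ := fun _ : Fin d => ℝ) i)) z := by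
    intro z
    rw [hasFDerivAt_pi]
    intro i
    exact ((hd i (z i)).hasFDerivAt).comp z (hasFDerivAt_apply i z)
  ext s hs
  rw [Measure.map_apply hmeas hs, densityMeasure, densityMeasure,
    withDensity_apply _ (hmeas hs), withDensity_apply _ hs]
  conv_rhs => rw [← Set.image_preimage_eq s hsurj]
  rw [lintegral_image_eq_lintegral_abs_det_fderiv_mul volume (hmeas hs)
    (fun z _ => (hfd z).hasFDerivWithinAt) hinj.injOn]
  refine lintegral_congr fun z => ?_
  rw [ContinuousLinearMap.det_pi]
  simp only [ContinuousLinearMap.det_toSpanSingleton]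
  have hp : 0 < ∏ i, S' i (z i) := Finset.prod_pos fun i _ => hpos i _
  rw [abs_of_pos hp, ← ENNReal.ofReal_mul hp.le, h, mul_comm]

/-- **Proposition (expressivity: prescribed mechanisms).** Given a latent CBN over the DAG
with parent map `pa`, with conditional-density family `p`, perfect stochastic interventions
`pt k` on every node `k`, and a C¹ diffeomorphic mixing function `f`. For each node `k`,
prescribe at most one distribution `M k` (with continuous strictly positive density) to be
matched either by the intervened mechanism of node `k` (nodes in `prescInt`) or — only for
root nodes — by the observational mechanism of node `k` (nodes in `prescObs`). Then there
exist `T ∈ S_scaling` (with inverse `Tinv`) and a second model `(q, qt)` over the same DAG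
such that, with `f′ := f ∘ Tinv`: the pushforwards match in every regime, the transition map
`f′⁻¹ ∘ f` is `T ∈ S_scaling`, and every prescribed mechanism is attained. -/
theorem cauca_expressivity_fix_mechanisms {d : ℕ}
    (pa : Fin d → Finset (Fin d))
    (hpa : ∀ i : Fin d, ∀ j ∈ pa i, j < i)
    (p : Fin d → (Fin d → ℝ) → ℝ) (hp : IsCondFamily pa p)
    (pt : Fin d → ℝ → ℝ) (hpt : ∀ k, IsC1Density (pt k))
    (f : (Fin d → ℝ) → (Fin d → ℝ)) (hf : IsC1Diffeo f)
    (prescInt prescObs : Finset (Fin d))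
    (hdisj : Disjoint prescInt prescObs)
    (hroot : ∀ k ∈ prescObs, pa k = ∅)
    (M : Fin d → ℝ → ℝ)
    (hM : ∀ k ∈ prescInt ∪ prescObs,
      Continuous (M k) ∧ (∀ x, 0 < M k x) ∧ (∫ x : ℝ, M k x) = 1) :
    ∃ (T Tinv : (Fin d → ℝ) → (Fin d → ℝ))
      (q : Fin d → (Fin d → ℝ) → ℝ) (qt : Fin d → ℝ → ℝ),
      InSScaling T ∧
      Function.LeftInverse Tinv T ∧ Function.RightInverse Tinv T ∧
      (∀ i : Fin d, (∀ z, 0 < q i z) ∧ DependsOnlyOn (q i) (insert i (pa i)) ∧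
        ∀ z, (∫ t : ℝ, q i (Function.update z i t)) = 1) ∧
      (∀ k : Fin d, (∀ x, 0 < qt k x) ∧ (∫ x : ℝ, qt k x) = 1) ∧
      Measure.map f (densityMeasure (jointDensity p)) =
        Measure.map (f ∘ Tinv) (densityMeasure (jointDensity q)) ∧
      (∀ k : Fin d,
        Measure.map f (densityMeasure fun z =>
            pt k (z k) * ∏ i ∈ ({k} : Finset (Fin d))ᶜ, p i z) =
        Measure.map (f ∘ Tinv) (densityMeasure fun z =>
            qt k (z k) * ∏ i ∈ ({k} : Finset (Fin d))ᶜ, q i z)) ∧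
      (∀ z : Fin d → ℝ, (f ∘ Tinv) (T z) = f z) ∧
      (∀ k ∈ prescInt, densityMeasure₁ (qt k) = densityMeasure₁ (M k)) ∧
      (∀ k ∈ prescObs, ∀ z : Fin d → ℝ,
        densityMeasure₁ (fun t => q k (Function.update z k t)) =
          densityMeasure₁ (M k)) := by
  classical
  have key : ∀ i : Fin d, ∃ T S S' : ℝ → ℝ, ContDiff ℝ 1 T ∧ ContDiff ℝ 1 S ∧
      Function.LeftInverse S T ∧
      Function.RightInverse S T ∧ (∀ x, HasDerivAt S (S' x) x) ∧ (∀ x, 0 < S' x) ∧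
      (i ∈ prescInt → ∀ x, pt i (S x) * S' x = M i x) ∧
      (i ∈ prescObs → ∀ x, p i (Function.update 0 i (S x)) * S' x = M i x) := by
    intro i
    by_cases h1 : i ∈ prescInt
    · obtain ⟨mc, mp, mi⟩ := hM i (Finset.mem_union_left _ h1)
      obtain ⟨rp, rc, ri⟩ := hpt i
      obtain ⟨T, S, S', a, b, c, e, g, h, k⟩ :=
        transport_exists (pt i) (M i) rc.continuous rp ri mc mp mi
      exact ⟨T, S, S', a, b, c, e, g, h, fun _ => k,
        fun h2 => absurd h2 (Finset.disjoint_left.1 hdisj h1)⟩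
    · by_cases h2 : i ∈ prescObs
      · obtain ⟨mc, mp, mi⟩ := hM i (Finset.mem_union_right _ h2)
        obtain ⟨rp, rc, -, ri⟩ := hp i
        obtain ⟨T, S, S', a, b, c, e, g, h, k⟩ :=
          transport_exists (fun t => p i (Function.update 0 i t)) (M i)
            (rc.continuous.comp (continuous_const.update i continuous_id)) (fun _ => rp _)
            (ri 0) mc mp mi
        exact ⟨T, S, S', a, b, c, e, g, h, fun h3 => absurd h3 h1, fun _ => k⟩
      · exact ⟨id, id, fun _ => 1, contDiff_id, contDiff_id, fun _ => rfl, fun _ => rfl,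
          fun x => hasDerivAt_id x, fun _ => one_pos, fun h => absurd h h1, fun h => absurd h h2⟩
  choose T S S' hT hS hl hr hd hpos hInt hObs using key
  have hb : ∀ i, Function.Bijective (S i) := fun i => ⟨(hr i).injective, (hl i).surjective⟩
  have hSmeas : Measurable (fun (z : Fin d → ℝ) i => S i (z i)) :=
    (continuous_pi fun i => (hS i).continuous.comp (continuous_apply i)).measurable
  have hupd : ∀ (z : Fin d → ℝ) (i : Fin d) (t : ℝ),
      (fun j => S j (Function.update z i t j)) =
        Function.update (fun j => S j (z j)) i (S i t) := by
    intro z i t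
    funext j
    by_cases hj : j = i
    · subst hj; simp
    · simp [hj]
  refine ⟨fun z i => T i (z i), fun z i => S i (z i),
    fun i z => p i (fun j => S j (z j)) * S' i (z i), fun k x => pt k (S k x) * S' k x,
    ⟨T, fun i => ⟨hT i, S i, hS i, hl i, hr i⟩, fun _ _ => rfl⟩,
    fun z => funext fun i => hl i (z i), fun z => funext fun i => hr i (z i),
    ?_, ?_, ?_, ?_, ?_, ?_, ?_⟩
  · intro i
    obtain ⟨rp, rc, rd, ri⟩ := hp i
    refine ⟨fun z => mul_pos (rp _) (hpos i _), ?_, ?_⟩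
    · intro z w hzw
      have h1 := rd (fun j => S j (z j)) (fun j => S j (w j)) fun j hj => by
        simp only [hzw j hj]
      simp only [h1, hzw i (Finset.mem_insert_self _ _)]
    · intro z
      simp only [hupd, Function.update_self]
      rw [integral_transport (S i) (S' i) (hd i) (hpos i) (hb i)
        (fun u => p i (Function.update (fun j => S j (z j)) i u)), ri]
  · intro k
    refine ⟨fun x => mul_pos ((hpt k).1 _) (hpos k x), ?_⟩
    rw [integral_transport (S k) (S' k) (hd k) (hpos k) (hb k) (pt k), (hpt k).2.2]
  · rw [← Measure.map_map hf.1.continuous.measurable hSmeas]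
    congr 1
    symm
    refine map_transport S S' hd hpos hb _ _ fun z => ?_
    simp only [jointDensity, Finset.prod_mul_distrib]
  · intro k
    rw [← Measure.map_map hf.1.continuous.measurable hSmeas]
    congr 1
    symm
    refine map_transport S S' hd hpos hb _ _ fun z => ?_
    simp only [Finset.prod_mul_distrib]
    rw [Fintype.prod_eq_mul_prod_compl k (fun i => S' i (z i))]
    ring
  · intro z
    simp only [Function.comp]
    congr 1
    exact funext fun i => hl i (z i)
  · intro k hk
    congr 1
    exact funext fun x => hInt k hk x
  · intro k hk z
    congr 1
    funext x
    simp only [hupd, Function.update_self]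
    rw [← hObs k hk x]
    congr 1
    refine (hp k).2.2.1 _ _ fun j hj => ?_
    rw [hroot k hk] at hj
    simp only [insert_empty_eq, Finset.mem_singleton] at hj
    subst hj
    simp
end
end
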